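/- In G = PSU(3,q), q = 2^(2^n), every subgroup isomorphic to the symmetric group Sym(3) is contained in exactly q+1 maximal subgroups of G of order 6(q+1)². -/

import Mathlib

/-!
Let `F = F_{q²}` with `q ≡ 4 mod 6`, let `G = SU(3, q)`, which has trivial center since
`gcd(3, q + 1) = 1`, and let `N` be the group of monomial matrices in `G`, that is, the stabilizer of
the self-polar triangle given by the standard basis. It is the extension of the torus `D` of diagonal
matrices, of order `(q + 1)²`, by `Sym(3)`.

*The maximal subgroups of order `6(q+1)²` are the conjugates of `N`.* The number `m = q + 1` is
coprime to 6, so Sylow subgroups of `D` are Sylow subgroups of any subgroup `M` of order `6m²`. A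
transfer argument gives a normal abelian subgroup of `M` of order `m²`. It contains a conjugate of a
diagonal element with distinct eigenvalues, hence it is conjugate to `D`, and `M` is conjugate to
`N` (`TorusData.conj`). Conversely `N` is maximal (`IsSU.isCoatom_mono`): a group of unitary
matrices with scalars that contains all monomial matrices and a further matrix `k` contains the
reflections whose centers are the columns of `k`. Counting norms of coordinates in hermitian planes
(`Herm.fill`) shows that it acts transitively on unit vectors, so it is the full unitary group
(`MonoSet.eq_all`).

*Subgroups `H ≅ Sym(3)`.* They are conjugate to the group of permutation matrices: a suitable
combination `v` of eigenvectors of an element `u` of order three is fixed by an involution of `H`,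
and `v, uv, u²v` is an orthonormal basis (`Herm.exists_fixed`, `IsSU.exists_conj_perm`).

*The count.* Let `H` consist of the permutation matrices. If `H` permutes the lines of an orthonormal
frame, an element of order three does so without fixed lines, because 3 does not divide `q + 1`, and
an involution fixes exactly one of them. The latter is spanned by a vector `(a, b, b)`, and being
orthogonal to its cyclic shift it is the image of the first basis vector under a unitary reflection
with center `(1, 1, 1)` (`IsSU.exists_cent`). There are `q + 1` such reflections, they centralize `H`,
and distinct ones give distinct frames because `N` is self-normalizing.
-/

open scoped Classical Pointwise

namespace PSUPaper

/-- `q = 2^(2^n)`. -/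
abbrev qval (n : ℕ) : ℕ := 2 ^ 2 ^ n

/-- The field with `q² = 2^(2^(n+1))` elements. -/
abbrev Fq2 (n : ℕ) : Type := GaloisField 2 (2 ^ (n + 1))

/-- The involutory automorphism `x ↦ x^q` of `F_{q²}`, as a star-ring structure. -/
noncomputable instance starRingFq2 (n : ℕ) : StarRing (Fq2 n) where
  star x := x ^ qval n
  star_involutive x := by
    letI : Fintype (Fq2 n) := Fintype.ofFinite _
    show (x ^ qval n) ^ qval n = x
    rw [← pow_mul]
    have h : qval n * qval n = 2 ^ 2 ^ (n + 1) := by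
      rw [← pow_add, ← two_mul, pow_succ, mul_comm]
    have hcard : Fintype.card (Fq2 n) = 2 ^ 2 ^ (n + 1) := by
      rw [← Nat.card_eq_fintype_card, GaloisField.card 2 (2 ^ (n + 1)) (by positivity)]
    rw [h, ← hcard]
    exact FiniteField.pow_card x
  star_mul x y := by
    show (x * y) ^ qval n = y ^ qval n * x ^ qval n
    rw [mul_pow, mul_comm]
  star_add x y := by
    show (x + y) ^ qval n = x ^ qval n + y ^ qval n
    exact add_pow_char_pow x y 2 (2 ^ n)

/-- `SU(3,q)`: the subgroup of the unitary group `{M | M * (M^σ)ᵀ = 1}` (with respect to the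
star structure `σ : x ↦ x^q` on `F_{q²}`) consisting of the matrices of determinant 1. -/
noncomputable def SU3 (n : ℕ) : Subgroup (Matrix.unitaryGroup (Fin 3) (Fq2 n)) where
  carrier := {M | (M : Matrix (Fin 3) (Fin 3) (Fq2 n)).det = 1}
  one_mem' := by simp
  mul_mem' := by
    intro a b ha hb
    simp only [Set.mem_setOf_eq, Matrix.UnitaryGroup.mul_val, Matrix.det_mul] at *
    rw [ha, hb, mul_one]
  inv_mem' := by
    intro a ha
    simp only [Set.mem_setOf_eq, Matrix.UnitaryGroup.inv_val] at *
    rw [Matrix.star_eq_conjTranspose, Matrix.det_conjTranspose, ha, star_one]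

/-- `PSU(3,q)`: the quotient of `SU(3,q)` by its center. -/
noncomputable abbrev PSU3 (n : ℕ) : Type := SU3 n ⧸ Subgroup.center (SU3 n)

/-- `mu` is the Möbius function `H ↦ μ(H, G)` of the subgroup lattice of `G`:
`μ(G,G) = 1` and `∑_{J : H ≤ J ≤ G} μ(J,G) = 0` for `H < G`. -/
def IsSubgroupMobius {G : Type*} [Group G] (mu : Subgroup G → ℤ) : Prop :=
  ∀ H : Subgroup G, (∑ᶠ K ∈ {K : Subgroup G | H ≤ K}, mu K) = if H = ⊤ then 1 else 0

/-- `H` and `K` are conjugate subgroups. -/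
def IsConjSub {G : Type*} [Group G] (H K : Subgroup G) : Prop :=
  ∃ g : G, Subgroup.map (MulAut.conj g).toMonoidHom H = K

/-- The conjugacy classes of subgroups of `G`. -/
abbrev SubClasses (G : Type*) [Group G] : Type _ :=
  Quotient (MulAction.orbitRel (ConjAct G) (Subgroup G))

/-- The conjugacy class of a subgroup. -/
def clsOf {G : Type*} [Group G] (H : Subgroup G) : SubClasses G :=
  Quotient.mk (MulAction.orbitRel (ConjAct G) (Subgroup G)) H

/-- The order on conjugacy classes of subgroups: `[H] ≤ [K]` iff `H` is contained in some
conjugate of `K`. -/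
def clsLe {G : Type*} [Group G] (x y : SubClasses G) : Prop :=
  ∃ H K : Subgroup G, clsOf H = x ∧ clsOf K = y ∧ ∃ g : ConjAct G, H ≤ g • K

/-- `lam` is the Möbius function `[H] ↦ μ([H], [G])` of the poset of conjugacy classes of
subgroups of `G`: `μ([G],[G]) = 1` and `∑_{[J] : [H] ≤ [J] ≤ [G]} μ([J],[G]) = 0` for
`[H] < [G]`. -/
def IsClassMobius {G : Type*} [Group G] (lam : SubClasses G → ℤ) : Prop :=
  ∀ x : SubClasses G, (∑ᶠ y ∈ {y : SubClasses G | clsLe x y}, lam y) =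
    if x = clsOf (⊤ : Subgroup G) then 1 else 0

/-- `m` is the Möbius function `H ↦ μ_{L_p}({1}, H)` of the poset `L_p` of `p`-subgroups of `G`:
`μ_{L_p}({1},{1}) = 1` and `∑_{J ∈ L_p : J ≤ K} μ_{L_p}({1},J) = 0` for `{1} < K ∈ L_p`. -/
def IsPMobiusBot {G : Type*} [Group G] (p : ℕ) (m : Subgroup G → ℤ) : Prop :=
  m ⊥ = 1 ∧ ∀ K : Subgroup G, IsPGroup p K → ⊥ < K →
    (∑ᶠ J ∈ {J : Subgroup G | IsPGroup p J ∧ J ≤ K}, m J) = 0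

/-! ### Subgroups of order `6 m²` in an abstract finite group -/

lemma sylow_conj {G : Type*} [Group G] [Finite G] {p : ℕ} [Fact p.Prime] (P Q : Sylow p G) :
    ∃ g : G, ∀ x, x ∈ P ↔ g⁻¹ * x * g ∈ Q := by
  obtain ⟨g, hg⟩ := MulAction.exists_smul_eq G Q P
  refine ⟨g, fun x => ?_⟩
  rw [← hg, ← SetLike.mem_coe, Sylow.coe_smul, Set.mem_smul_set_iff_inv_smul_mem]
  simp [MulAut.smul_def, ← map_inv]

/-- If the smallest prime factor `p` of `|G|` divides `|G|` exactly once, then `G` has a subgroup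
of index `p` containing all elements of order prime to `p`. -/
lemma exists_complement {G : Type*} [Group G] [Finite G] (p c : ℕ) (hp : p.Prime)
    (hmin : (Nat.card G).minFac = p) (hc : Nat.card G = p * c) (hpc : Nat.Coprime p c) :
    ∃ K : Subgroup G, Nat.card K = c ∧ ∀ x, x ^ c = 1 → x ∈ K := by
  have := Fact.mk hp
  let P : Sylow p G := default
  have hc0 : c ≠ 0 := by
    rintro rfl
    exact Nat.card_pos.ne' (hc.trans (mul_zero p))
  have hP : Nat.card P = p := by
    rw [Sylow.card_eq_multiplicity, hc, Nat.factorization_mul hp.ne_zero hc0]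
    simp [hp.factorization_self,
      Nat.factorization_eq_zero_of_not_dvd ((Nat.Prime.coprime_iff_not_dvd hp).1 hpc)]
  have hcyc : IsCyclic P := isCyclic_of_prime_card hP
  have hcomp := IsCyclic.isComplement' hmin hcyc
  set φ := MonoidHom.transferSylow P (hcyc.normalizer_le_centralizer hmin) with hφ
  refine ⟨φ.ker, ?_, fun x hx => ?_⟩
  · have h := hcomp.card_mul_card
    have hP' : Nat.card (P : Subgroup G) = p := hP
    rw [hP', hc, mul_comm] at h
    exact Nat.eq_of_mul_eq_mul_left hp.pos h
  · rw [MonoidHom.mem_ker]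
    have h1 : orderOf (φ x) ∣ c := orderOf_dvd_of_pow_eq_one (by rw [← map_pow, hx, map_one])
    have h2 : orderOf (φ x) ∣ p := by
      have : orderOf (φ x) ∣ Nat.card P := orderOf_dvd_natCard _
      rwa [hP] at this
    exact orderOf_eq_one_iff.1 (Nat.eq_one_of_dvd_coprimes hpc h2 h1)

/-- A group of order `6 m²` with `m` prime to `6` has a normal subgroup of order `m²`, obtained by
two normal complements, for the primes `2` and `3`. -/
lemma exists_normal_of_card {G : Type*} [Group G] [Finite G] (m : ℕ) (hm : Nat.Coprime m 6)
    (hG : Nat.card G = 6 * m ^ 2) : ∃ A : Subgroup G, A.Normal ∧ Nat.card A = m ^ 2 := by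
  have hm2 : Nat.Coprime 2 (m ^ 2) := (Nat.Coprime.coprime_dvd_right (by norm_num) hm).symm.pow_right 2
  have hm3 : Nat.Coprime 3 (m ^ 2) := (Nat.Coprime.coprime_dvd_right (by norm_num) hm).symm.pow_right 2
  obtain ⟨K, hK, hK'⟩ := exists_complement (G := G) 2 (3 * m ^ 2) Nat.prime_two
    ((Nat.minFac_eq_two_iff _).2 (by rw [hG]; omega)) (by rw [hG]; ring)
    (Nat.Coprime.mul_right (by norm_num) hm2)
  have hmin : (Nat.card K).minFac = 3 := by
    rw [hK]
    have h3 : (3 * m ^ 2).minFac ≤ 3 := Nat.minFac_le_of_dvd (by norm_num) (Dvd.intro _ rfl)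
    have hpr : (3 * m ^ 2).minFac.Prime := Nat.minFac_prime (by omega)
    have h2 : (3 * m ^ 2).minFac ≠ 2 := by
      intro h
      have := (Nat.minFac_eq_two_iff _).1 h
      exact (Nat.Prime.coprime_iff_not_dvd Nat.prime_two).1
        (Nat.Coprime.mul_right (by norm_num) hm2 : Nat.Coprime 2 (3 * m ^ 2)) this
    have := hpr.two_le
    omega
  obtain ⟨L, hL, hL'⟩ := exists_complement (G := K) 3 (m ^ 2) Nat.prime_three hmin hK hm3
  have key : ∀ x : G, x ∈ L.map K.subtype ↔ x ^ (m ^ 2) = 1 := by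
    intro x
    constructor
    · rintro ⟨y, hy, rfl⟩
      have : (⟨y, hy⟩ : L) ^ Nat.card L = 1 := pow_card_eq_one'
      rw [hL] at this
      have h2 : y ^ (m ^ 2) = 1 := congrArg Subtype.val this
      rw [← map_pow, h2, map_one]
    · intro hx
      have hxK : x ∈ K := hK' x (by rw [mul_comm, pow_mul, hx, one_pow])
      exact ⟨⟨x, hxK⟩, hL' _ (Subtype.ext hx), rfl⟩
  refine ⟨L.map K.subtype, ⟨fun x hx g => ?_⟩, ?_⟩
  · rw [key] at hx ⊢
    rw [conj_pow, hx]; simp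
  · rw [← hL]
    exact Nat.card_congr (L.equivMapOfInjective _ K.subtype_injective).toEquiv.symm

/-- The hypotheses on a finite group `G` with an abelian subgroup `D` of order `m²`, contained in a
subgroup `N` of order `6 m²`, which force all subgroups of order `6 m²` to be conjugate to `N`. -/
structure TorusData {G : Type*} [Group G] (D N : Subgroup G) (m : ℕ) : Prop where
  cop : Nat.Coprime m 6
  ne_one : m ≠ 1
  le : D ≤ N
  comm : ∀ x ∈ D, ∀ y ∈ D, x * y = y * x
  cardD : Nat.card D = m ^ 2
  cardN : Nat.card N = 6 * m ^ 2
  mem_of_pow : ∀ y ∈ N, ∀ k, Nat.Coprime k 6 → y ^ k = 1 → y ∈ D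
  regular : ∀ p, p.Prime → p ∣ m → ∃ d ∈ D, d ^ p = 1 ∧ ∀ x, x * d * x⁻¹ ∈ D → x ∈ N

namespace TorusData

variable {G : Type*} [Group G] [Finite G] {D N : Subgroup G} {m : ℕ}

/-- The `p`-part of `D` is a Sylow subgroup of `G`, because its normalizer lies in `N`. -/
lemma exists_sylow (h : TorusData D N m) (p : ℕ) [hp : Fact p.Prime] (hpm : p ∣ m) :
    ∃ Q : Sylow p G, (∀ x ∈ Q, x ∈ D) ∧ ∀ y, (∀ x ∈ Q, y * x * y⁻¹ ∈ Q) → y ∈ N := by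
  obtain ⟨d, hd, hdp, hdN⟩ := h.regular p hp.out hpm
  have hp6 : Nat.Coprime p 6 := h.cop.coprime_dvd_left hpm
  let E : Subgroup G :=
    { carrier := {x | x ∈ D ∧ ∃ j, x ^ p ^ j = 1}
      one_mem' := ⟨D.one_mem, 0, by simp⟩
      mul_mem' := by
        rintro a b ⟨ha, i, hi⟩ ⟨hb, j, hj⟩
        refine ⟨D.mul_mem ha hb, i + j, ?_⟩
        rw [Commute.mul_pow (h.comm a ha b hb), pow_add, pow_mul, hi, mul_comm (p ^ i), pow_mul, hj]; simp
      inv_mem' := by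
        rintro a ⟨ha, i, hi⟩
        exact ⟨D.inv_mem ha, i, by rw [inv_pow, hi, inv_one]⟩ }
  have hE : IsPGroup p E := by
    rintro ⟨x, hx, j, hj⟩
    exact ⟨j, Subtype.ext hj⟩
  have hdE : d ∈ E := ⟨hd, 1, by simpa using hdp⟩
  have hnorm : ∀ y, (∀ x ∈ E, y * x * y⁻¹ ∈ E) → y ∈ N := fun y hy => hdN y (hy d hdE).1
  obtain ⟨Q, hQ⟩ := hE.exists_le_sylow
  have hQE : (Q : Subgroup G) ≤ E := by
    by_contra hcon
    have : Group.IsNilpotent Q := Q.isPGroup'.isNilpotent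
    have hlt : E.subgroupOf Q < ⊤ := by
      rw [lt_top_iff_ne_top]
      intro h'
      exact hcon (Subgroup.subgroupOf_eq_top.1 h')
    have := Group.normalizerCondition_of_isNilpotent (G := Q) _ hlt
    obtain ⟨y, hy, hyE⟩ := SetLike.exists_of_lt this
    rw [Subgroup.mem_normalizer_iff] at hy
    apply hyE
    have hyN : (y : G) ∈ N := by
      apply hnorm
      intro x hx
      have := (hy ⟨x, hQ hx⟩).1 (by simpa [Subgroup.mem_subgroupOf] using hx)
      simpa [Subgroup.mem_subgroupOf] using this
    obtain ⟨j, hj⟩ := Q.isPGroup' y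
    have hj' : (y : G) ^ p ^ j = 1 := by simpa using congrArg Subtype.val hj
    rw [Subgroup.mem_subgroupOf]
    exact ⟨h.mem_of_pow _ hyN (p ^ j) (hp6.pow_left j) hj', j, hj'⟩
  refine ⟨Q, fun x hx => (hQE hx).1, fun y hy => hnorm y fun x hx => hQE (hy x (hQ hx))⟩

lemma conj_pow_card (A : Subgroup G) {a : G} (ha : a ∈ A) (g : G) :
    (g⁻¹ * a * g) ^ Nat.card A = 1 := by
  have h0 : a ^ Nat.card A = 1 :=
    congrArg Subtype.val (pow_card_eq_one' : (⟨a, ha⟩ : A) ^ Nat.card A = 1)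
  have := conj_pow (i := Nat.card A) (a := g⁻¹) (b := a)
  rw [inv_inv] at this
  rw [this, h0]; simp

/-- In a subgroup `A` of order `m²`, Sylow `p`-subgroups are Sylow in `G`. -/
lemma sylow_of_card (h : TorusData D N m) (p : ℕ) [hp : Fact p.Prime] (hpm : p ∣ m)
    (A : Subgroup G) (hA : Nat.card A = m ^ 2) (P : Sylow p A) :
    ∃ Q : Sylow p G, (Q : Subgroup G) = (P : Subgroup A).map A.subtype := by
  obtain ⟨Q, hQD, -⟩ := h.exists_sylow p hpm
  have hm0 : m ≠ 0 := by
    rintro rfl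
    exact Nat.card_pos.ne' hA
  have h1 : Nat.card Q ∣ m ^ 2 := by
    rw [← h.cardD]
    exact Subgroup.card_dvd_of_le (H := (Q : Subgroup G)) (K := D) hQD
  have h2 : (Nat.card G).factorization p = (m ^ 2).factorization p := by
    apply le_antisymm
    · rw [Sylow.card_eq_multiplicity] at h1
      exact (hp.out.pow_dvd_iff_le_factorization (pow_ne_zero 2 hm0)).1 h1
    · have h3 : m ^ 2 ∣ Nat.card G := hA ▸ Subgroup.card_subgroup_dvd_card A
      exact (Nat.factorization_le_iff_dvd (pow_ne_zero 2 hm0) Nat.card_pos.ne').2 h3 p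
  refine ⟨Sylow.ofCard ((P : Subgroup A).map A.subtype) ?_, rfl⟩
  rw [h2, ← hA, ← Sylow.card_eq_multiplicity P]
  exact Nat.card_congr ((P : Subgroup A).equivMapOfInjective _ A.subtype_injective).toEquiv.symm

/-- Subgroups of order `m²` are abelian: by Burnside's transfer theorem they have a normal
`p`-complement with abelian quotient for every prime `p`. -/
lemma abelian (h : TorusData D N m) (A : Subgroup G) (hA : Nat.card A = m ^ 2) (a b : A) :
    a * b = b * a := by
  by_contra hab
  have hc : a * b * a⁻¹ * b⁻¹ ≠ 1 := by
    intro hc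
    exact hab (by rwa [mul_inv_eq_one, mul_inv_eq_iff_eq_mul] at hc)
  have ho : orderOf (a * b * a⁻¹ * b⁻¹) ≠ 1 := fun h' => hc (orderOf_eq_one_iff.1 h')
  obtain ⟨p, hp, hpo⟩ := Nat.exists_prime_and_dvd ho
  have := Fact.mk hp
  have hpm : p ∣ m := hp.dvd_of_dvd_pow (hA ▸ hpo.trans (orderOf_dvd_natCard _))
  let P : Sylow p A := default
  obtain ⟨R, hR⟩ := h.sylow_of_card p hpm A hA P
  obtain ⟨Q, hQD, hQN⟩ := h.exists_sylow p hpm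
  obtain ⟨g, hg⟩ := sylow_conj R Q
  have hPR : ∀ x : A, x ∈ P ↔ (x : G) ∈ R := by
    intro x
    have : (x : G) ∈ R ↔ (x : G) ∈ (R : Subgroup G) := Iff.rfl
    rw [this, hR]
    refine ⟨fun h => ⟨x, h, rfl⟩, ?_⟩
    rintro ⟨y, hy, hyx⟩
    rw [← Subtype.ext hyx]
    exact hy
  have hA6 : Nat.Coprime (Nat.card A) 6 := by rw [hA]; exact h.cop.pow_left 2
  have hP : Subgroup.normalizer (P : Set A) ≤ Subgroup.centralizer (P : Set A) := by
    intro y hy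
    rw [Subgroup.mem_set_normalizer_iff] at hy
    have hyD : g⁻¹ * y * g ∈ D := by
      refine h.mem_of_pow _ (hQN _ fun x hx => ?_) _ hA6 ?_
      · have hx' : g * x * g⁻¹ ∈ R := by rw [hg]; simpa [mul_assoc] using hx
        have hxA : g * x * g⁻¹ ∈ A := by
          have : g * x * g⁻¹ ∈ (R : Subgroup G) := hx'
          rw [hR] at this
          obtain ⟨z, -, hz⟩ := this
          rw [← hz]; exact z.2
        have := (hy ⟨_, hxA⟩).1 ((hPR _).2 hx')
        have := (hg _).1 ((hPR _).1 this)
        simpa [mul_assoc] using this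
      · exact conj_pow_card A y.2 g
    rw [Subgroup.mem_centralizer_iff]
    intro x hx
    have hxD : g⁻¹ * x * g ∈ D := hQD _ ((hg _).1 ((hPR _).1 hx))
    have := h.comm _ hxD _ hyD
    apply Subtype.ext
    have h3 : g * (g⁻¹ * x * g * (g⁻¹ * y * g)) * g⁻¹ = g * (g⁻¹ * y * g * (g⁻¹ * x * g)) * g⁻¹ := by
      rw [this]
    simpa [mul_assoc] using h3
  have hker := MonoidHom.not_dvd_card_ker_transferSylow P hP
  apply hker
  have hmem : a * b * a⁻¹ * b⁻¹ ∈ (MonoidHom.transferSylow P hP).ker := by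
    have hcomm : ∀ x y : P, x * y = y * x := fun x y =>
      Subtype.ext (hP (Subgroup.le_normalizer y.2) x x.2)
    rw [MonoidHom.mem_ker]
    simp only [map_mul, map_inv]
    rw [hcomm (MonoidHom.transferSylow P hP a)]; simp
  refine hpo.trans ?_
  have := orderOf_dvd_natCard (⟨_, hmem⟩ : (MonoidHom.transferSylow P hP).ker)
  rwa [Subgroup.orderOf_mk] at this

/-- Every subgroup of order `6 m²` is conjugate to `N`. -/
lemma conj (h : TorusData D N m) (M : Subgroup G) (hM : Nat.card M = 6 * m ^ 2) :
    ∃ g : G, ∀ x, x ∈ M ↔ g⁻¹ * x * g ∈ N := by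
  obtain ⟨B, hBn, hB⟩ := exists_normal_of_card m h.cop hM
  have hBA : Nat.card (B.map M.subtype) = m ^ 2 := by
    rw [← hB]
    exact Nat.card_congr (B.equivMapOfInjective _ M.subtype_injective).toEquiv.symm
  have hnormal : ∀ x ∈ M, ∀ a ∈ B.map M.subtype, x * a * x⁻¹ ∈ B.map M.subtype := by
    rintro x hx _ ⟨a, ha, rfl⟩
    exact ⟨⟨x, hx⟩ * a * ⟨x, hx⟩⁻¹, hBn.conj_mem a ha _, rfl⟩
  set A := B.map M.subtype with hAdef
  obtain ⟨p, hp, hpm⟩ := Nat.exists_prime_and_dvd h.ne_one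
  have := Fact.mk hp
  obtain ⟨R, hR⟩ := h.sylow_of_card p hpm A hBA default
  obtain ⟨Q, hQD, hQN⟩ := h.exists_sylow p hpm
  obtain ⟨g, hg⟩ := sylow_conj R Q
  have hRA : ∀ x ∈ R, x ∈ A := by
    intro x hx
    have : x ∈ (R : Subgroup G) := hx
    rw [hR] at this
    obtain ⟨z, -, rfl⟩ := this
    exact z.2
  have hA6 : Nat.Coprime (Nat.card A) 6 := by rw [hBA]; exact h.cop.pow_left 2
  have hAD : ∀ a ∈ A, g⁻¹ * a * g ∈ D := by
    intro a ha
    refine h.mem_of_pow _ (hQN _ fun x hx => ?_) _ hA6 ?_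
    · have hx' : g * x * g⁻¹ ∈ R := by rw [hg]; simpa [mul_assoc] using hx
      have hcomm := congrArg Subtype.val (h.abelian A hBA ⟨a, ha⟩ ⟨_, hRA _ hx'⟩)
      have h3 : g⁻¹ * a * g * x * (g⁻¹ * a * g)⁻¹ = g⁻¹ * (a * (g * x * g⁻¹)) * a⁻¹ * g := by group
      have h4 : a * (g * x * g⁻¹) = g * x * g⁻¹ * a := hcomm
      rw [h3, h4]
      simpa [mul_assoc] using hx
    · exact conj_pow_card A ha g
  have hmap : ∀ K : Subgroup G, Nat.card (K.map (MulAut.conj g⁻¹).toMonoidHom) = Nat.card K :=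
    fun K => Nat.card_congr (K.equivMapOfInjective _ (MulAut.conj g⁻¹).injective).toEquiv.symm
  have hAD' : A.map (MulAut.conj g⁻¹).toMonoidHom = D := by
    apply Subgroup.eq_of_le_of_card_ge
    · rintro _ ⟨a, ha, rfl⟩
      simpa using hAD a ha
    · rw [hmap, hBA, h.cardD]
  obtain ⟨d, hd, -, hdN⟩ := h.regular p hp hpm
  have hMN : M.map (MulAut.conj g⁻¹).toMonoidHom = N := by
    apply Subgroup.eq_of_le_of_card_ge
    · rintro _ ⟨x, hx, rfl⟩
      apply hdN
      rw [← hAD'] at hd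
      obtain ⟨a, ha, rfl⟩ := hd
      have := hAD _ (hnormal x hx a ha)
      simpa [mul_assoc] using this
    · rw [hmap, hM, h.cardN]
  refine ⟨g, fun x => ?_⟩
  rw [← hMN]
  constructor
  · intro hx
    exact ⟨x, hx, by simp⟩
  · rintro ⟨y, hy, hyx⟩
    have : y = x := by simpa using hyx
    exact this ▸ hy

end TorusData

/-! ### Quadratic extensions of finite fields in characteristic two -/

/-- The arithmetic of the involution `star` on `F = F_{q²}` used below. The elements `x` with
`x * star x = 1` form the cyclic group of order `q + 1`, which has no element of order three. -/
structure Herm (F : Type*) [Field F] [StarRing F] (q : ℕ) : Prop where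
  two : (2 : F) = 0
  fin : Finite F
  cardU : Nat.card {x : F // x * star x = 1} = q + 1
  cardFix : Nat.card {x : F // star x = x} ≤ q
  normSurj : ∀ r : F, star r = r → ∃ w : F, w * star w = r
  cube : ∀ x : F, x * star x = 1 → x ^ 3 = 1 → x = 1
  cubeRoot : ∀ x : F, x * star x = 1 → ∃ z : F, z * star z = 1 ∧ z ^ 3 = x
  omega : ∃ w : F, star w = w ∧ w ^ 2 + w + 1 = 0
  even : 2 ∣ q
  four : 4 ≤ q

lemma qval_mod (n : ℕ) (hn : 1 ≤ n) : ∃ k, qval n = 6 * k + 4 := by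
  obtain ⟨m, rfl⟩ : ∃ m, n = m + 1 := ⟨n - 1, by omega⟩
  have h1 : qval (m + 1) = 4 ^ 2 ^ m := by
    rw [qval, pow_succ 2 m, mul_comm, pow_mul]; norm_num
  rw [h1]
  have h : ∀ j, ∃ k, 4 ^ (j + 1) = 6 * k + 4 := by
    intro j
    induction j with
    | zero => exact ⟨0, rfl⟩
    | succ j ih =>
      obtain ⟨k, hk⟩ := ih
      exact ⟨4 * k + 2, by rw [pow_succ, hk]; ring⟩
  obtain ⟨j, hj⟩ : ∃ j, 2 ^ m = j + 1 := ⟨2 ^ m - 1, by have := Nat.one_le_two_pow (n := m); omega⟩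
  rw [hj]
  exact h j

lemma star_def (n : ℕ) (x : Fq2 n) : star x = x ^ qval n := rfl

instance finite_Fq2 (n : ℕ) : Finite (Fq2 n) := inferInstance

lemma card_units_Fq2 (n : ℕ) : Nat.card (Fq2 n)ˣ = (qval n - 1) * (qval n + 1) := by
  have h : qval n * qval n = 2 ^ 2 ^ (n + 1) := by
    rw [← pow_add, ← two_mul, pow_succ, mul_comm]
  rw [Nat.card_units, GaloisField.card 2 (2 ^ (n + 1)) (by positivity), ← h]
  obtain ⟨k, hk⟩ : ∃ k, qval n = k + 1 :=
    ⟨qval n - 1, by have : 1 ≤ qval n := Nat.one_le_two_pow; omega⟩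
  rw [hk]
  simp
  ring_nf
  omega

lemma herm_Fq2 (n : ℕ) (hn : 1 ≤ n) : Herm (Fq2 n) (qval n) := by
  obtain ⟨k, hk⟩ := qval_mod n hn
  have hcard := card_units_Fq2 n
  have hnorm : ∀ x : Fq2 n, x * star x = x ^ (qval n + 1) := by
    intro x; exact (pow_succ' x _).symm
  obtain ⟨g, hg⟩ := IsCyclic.exists_generator (α := (Fq2 n)ˣ)
  have hog : orderOf g = (qval n - 1) * (qval n + 1) := by
    rw [← hcard]; exact orderOf_eq_card_of_forall_mem_zpowers hg
  have hpow : ∀ x : (Fq2 n)ˣ, ∃ i : ℕ, g ^ i = x := fun x => by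
    have := hg x
    rw [← mem_powers_iff_mem_zpowers] at this
    exact this
  refine ⟨?_, inferInstance, ?_, ?_, ?_, ?_, ?_, ?_, ?_, ?_⟩
  · exact CharTwo.two_eq_zero
  · have h1 := IsCyclic.card_powMonoidHom_ker (Fq2 n)ˣ (qval n + 1)
    rw [hcard, Nat.gcd_mul_left_left] at h1
    rw [← h1]
    refine Nat.card_congr ⟨fun x => ⟨Units.mk0 x.1 ?_, ?_⟩, fun x => ⟨x.1, ?_⟩, ?_, ?_⟩
    · intro h0
      have := x.2
      rw [h0] at this
      simp at this
    · rw [MonoidHom.mem_ker]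
      ext
      simpa using (hnorm x.1).symm.trans x.2
    · have := x.2
      rw [MonoidHom.mem_ker] at this
      rw [hnorm]
      simpa using congrArg Units.val this
    · intro x; rfl
    · intro x
      ext
      rfl
  · have hne : (Polynomial.X ^ qval n - Polynomial.X : Polynomial (Fq2 n)) ≠ 0 :=
      FiniteField.X_pow_card_sub_X_ne_zero _ (by omega)
    have hsub : {x : Fq2 n | star x = x} ⊆
        ((Polynomial.X ^ qval n - Polynomial.X : Polynomial (Fq2 n)).roots.toFinset : Set (Fq2 n)) := by
      intro x hx
      have hx' : x ^ qval n = x := hx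
      simp [hne, Polynomial.IsRoot, hx']
    calc Nat.card {x : Fq2 n // star x = x} = Set.ncard {x : Fq2 n | star x = x} := rfl
      _ ≤ _ := Set.ncard_le_ncard hsub (Finset.finite_toSet _)
      _ ≤ qval n := by
        rw [Set.ncard_coe_finset]
        refine (Multiset.toFinset_card_le _).trans ((Polynomial.card_roots' _).trans ?_)
        rw [FiniteField.X_pow_card_sub_X_natDegree_eq _ (by omega)]
  · intro r hr
    by_cases h0 : r = 0
    · exact ⟨0, by simp [h0]⟩
    obtain ⟨i, hi⟩ := hpow (Units.mk0 r h0)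
    have h1 : (Units.mk0 r h0) ^ (qval n - 1) = 1 := by
      have h2 : r ^ (qval n - 1) * r = 1 * r := by
        rw [← pow_succ, Nat.sub_add_cancel (by omega), one_mul]; exact hr
      ext
      simpa using mul_right_cancel₀ h0 h2
    rw [← hi, ← pow_mul] at h1
    have h2 := orderOf_dvd_of_pow_eq_one h1
    rw [hog, mul_comm] at h2
    obtain ⟨j, rfl⟩ := Nat.dvd_of_mul_dvd_mul_right (by omega) h2
    refine ⟨((g ^ j : (Fq2 n)ˣ) : Fq2 n), ?_⟩
    rw [hnorm]
    have := congrArg Units.val hi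
    rw [mul_comm, pow_mul] at this
    simpa using this
  · intro x hx h3
    rw [hnorm] at hx
    have h1 : x ^ (qval n + 1) = x ^ 2 := by
      rw [hk, show 6 * k + 4 + 1 = 3 * (2 * k + 1) + 2 by ring, pow_add, pow_mul, h3, one_pow, one_mul]
    rw [h1] at hx
    calc x = x ^ 2 * x := by rw [hx, one_mul]
      _ = 1 := by rw [← pow_succ, h3]
  · intro x hx
    have hx' := hx
    rw [hnorm] at hx
    -- With `q = 6 k + 4` the exponent satisfies `3 (2 k + 2) = (q + 1) + 1`.
    refine ⟨x ^ (2 * k + 2), ?_, ?_⟩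
    · rw [star_pow, ← mul_pow, hx', one_pow]
    · rw [← pow_mul, show (2 * k + 2) * 3 = (qval n + 1) + 1 by rw [hk]; ring, pow_succ, hx, one_mul]
  · have h3 : qval n - 1 = 3 * (2 * k + 1) := by omega
    set w : (Fq2 n)ˣ := g ^ ((2 * k + 1) * (qval n + 1)) with hw
    have hw3 : w ^ 3 = 1 := by
      rw [hw, ← pow_mul, ← pow_orderOf_eq_one g, hog, h3]
      congr 1
      ring
    have hw1 : w ≠ 1 := by
      intro h
      have := orderOf_dvd_of_pow_eq_one h
      rw [hog, h3] at this
      have := Nat.le_of_dvd (by positivity) this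
      nlinarith
    have hw3' : (w : Fq2 n) ^ 3 = 1 := by
      have := congrArg Units.val hw3
      simpa using this
    refine ⟨w, ?_, ?_⟩
    · rw [star_def, hk, show 6 * k + 4 = 3 * (2 * k + 1) + 1 by ring, pow_succ, pow_mul, hw3', one_pow,
        one_mul]
    · have hw1' : (w : Fq2 n) - 1 ≠ 0 := by
        rw [sub_ne_zero]
        intro h
        exact hw1 (Units.ext h)
      apply mul_left_cancel₀ hw1'
      linear_combination hw3'
  · omega
  · omega

section Plane

variable {F : Type*} [Field F] [StarRing F] {q : ℕ}

/-- For `x ≠ 0` the traces `l x + star (l x)`, with `l` of norm one, take more than `q / 2` values,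
since each of them is taken at most twice. -/
lemma Herm.trace_card (hF : Herm F q) (c x : F) (hx : x ≠ 0) :
    q + 2 ≤ 2 * Set.ncard {s : F | ∃ l : F, l * star l = 1 ∧ s = c + (l * x + star (l * x))} := by
  classical
  have := hF.fin
  let _ : Fintype F := Fintype.ofFinite F
  set U : Finset F := Finset.univ.filter fun l => l * star l = 1 with hU
  set f : F → F := fun l => c + (l * x + star (l * x)) with hf
  have hcU : U.card = q + 1 := by
    rw [← hF.cardU, Nat.card_eq_fintype_card, Fintype.card_subtype]
  have hset : {s : F | ∃ l : F, l * star l = 1 ∧ s = c + (l * x + star (l * x))} = (U.image f : Set F) := by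
    ext s
    simp [hU, hf, eq_comm]
  have hfib : ∀ s ∈ U.image f, (U.filter fun l => f l = s).card ≤ 2 := by
    intro s hs
    obtain ⟨l, hl, rfl⟩ := Finset.mem_image.1 hs
    have hl1 : l * star l = 1 := by simpa [hU] using hl
    -- `m x` is a root of `(Z - l x) (Z - star (l x))`.
    have hsub : (U.filter fun m => f m = f l) ⊆ {l, star (l * x) / x} := by
      intro m hm
      have hm1 : m * star m = 1 := by simpa [hU] using (Finset.mem_filter.1 hm).1
      have hm2 : m * x + star (m * x) = l * x + star (l * x) := by
        simpa [hf] using (Finset.mem_filter.1 hm).2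
      have hprod : (m * x - l * x) * (m * x - star (l * x)) = 0 := by
        simp only [star_mul'] at hm2 ⊢
        linear_combination (m * x) * hm2 + x * star x * hl1 - x * star x * hm1
      rw [Finset.mem_insert, Finset.mem_singleton]
      rcases mul_eq_zero.1 hprod with h | h
      · left
        exact mul_right_cancel₀ hx (sub_eq_zero.1 h)
      · right
        rw [eq_div_iff hx]
        exact sub_eq_zero.1 h
    exact (Finset.card_le_card hsub).trans Finset.card_le_two
  have h := Finset.card_le_mul_card_image U 2 hfib
  rw [hset, Set.ncard_coe_finset]
  have := hF.even
  omega

lemma Herm.exists_trace_ne (hF : Herm F q) (x : F) (hx : x ≠ 0) :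
    ∃ l : F, l * star l = 1 ∧ l * x + star (l * x) ≠ 0 := by
  by_contra! hcon
  have h := hF.trace_card 0 x hx
  have hsub : {s : F | ∃ l : F, l * star l = 1 ∧ s = 0 + (l * x + star (l * x))} ⊆ {0} := by
    rintro s ⟨l, hl, rfl⟩
    rw [hcon l hl, add_zero]; rfl
  have h2 := Set.ncard_le_ncard hsub
  rw [Set.ncard_singleton] at h2
  have := hF.four
  omega

lemma Herm.exists_ne_one (hF : Herm F q) : ∃ l : F, l * star l = 1 ∧ l ≠ 1 := by
  have := hF.fin
  have h : 1 < Nat.card {x : F // x * star x = 1} := by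
    rw [hF.cardU]; have := hF.four; omega
  rw [Finite.one_lt_card_iff_nontrivial] at h
  obtain ⟨x, hx⟩ := exists_ne (⟨1, by simp⟩ : {x : F // x * star x = 1})
  exact ⟨x.1, x.2, fun h' => hx (Subtype.ext h')⟩

lemma Herm.add_self (hF : Herm F q) (x : F) : x + x = 0 := by
  linear_combination x * hF.two

lemma Herm.eq_of_add (hF : Herm F q) {x y : F} (h : x + y = 0) : x = y := by
  linear_combination h - y * hF.two

lemma eq_zero_of_norm {x : F} (h : x * star x = 0) : x = 0 := by
  rcases mul_eq_zero.1 h with h | h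
  · exact h
  · exact star_eq_zero.1 h

lemma exists_phase {x y : F} (h : x * star x = y * star y) : ∃ l : F, l * star l = 1 ∧ x = l * y := by
  by_cases hy : y = 0
  · refine ⟨1, by simp, ?_⟩
    rw [hy] at h ⊢
    rw [mul_zero]
    exact eq_zero_of_norm (by simpa using h)
  · refine ⟨x / y, ?_, by field_simp⟩
    have hy' : star y ≠ 0 := fun h => hy (star_eq_zero.1 h)
    rw [star_div₀, div_mul_div_comm, h]
    field_simp

/-- A set `X` of vectors of a hermitian plane, given in coordinates with respect to an orthonormal
basis `f₁, f₂`, which contains `f₁` and is stable under scalars of norm one, under the reflections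
with center `f₁`, and under the reflections with center `a f₁ + b f₂` for some nonzero `a, b`,
contains all unit vectors. The reason is that the set of norms of second coordinates has more than
`q / 2` elements in `X`, and would also have more than `q / 2` outside of `X`. -/
theorem Herm.fill (hF : Herm F q) (X : Set (F × F)) (a b : F) (ha : a ≠ 0) (hb : b ≠ 0)
    (hab : a * star a + b * star b = 1)
    (h1 : ∀ x y l : F, l * star l = 1 → (x, y) ∈ X → (l * x, l * y) ∈ X)
    (h2 : ∀ x y l : F, l * star l = 1 → (x, y) ∈ X → (l * x, y) ∈ X)
    (h3 : ∀ x y l : F, l * star l = 1 → (x, y) ∈ X →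
      (x + (l + 1) * (x * star a + y * star b) * a, y + (l + 1) * (x * star a + y * star b) * b) ∈ X)
    (h4 : ((1, 0) : F × F) ∈ X) (x y : F) (hxy : x * star x + y * star y = 1) : (x, y) ∈ X := by
  have := hF.fin
  have two := hF.two
  have hU : ∀ l : F, l * star l = 1 → star l * star (star l) = 1 := by
    intro l hl; rw [star_star, mul_comm]; exact hl
  have h5 : ∀ x y l m : F, l * star l = 1 → m * star m = 1 → (x, y) ∈ X → (l * x, m * y) ∈ X := by
    intro x y l m hl hm hxy
    have := h2 _ _ (l * star m) (by rw [star_mul', mul_mul_mul_comm, hl, hU m hm, one_mul])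
      (h1 x y m hm hxy)
    rwa [show l * star m * (m * x) = l * x by linear_combination l * x * hm] at this
  have h6 : ∀ x y x' y' : F, (x, y) ∈ X → x' * star x' = x * star x → y' * star y' = y * star y →
      (x', y') ∈ X := by
    intro x y x' y' hxy hx hy
    obtain ⟨l, hl, rfl⟩ := exists_phase hx
    obtain ⟨m, hm, rfl⟩ := exists_phase hy
    exact h5 x y l m hl hm hxy
  have hunit : ∀ x y l : F, l * star l = 1 → x * star x + y * star y = 1 →
      (x + (l + 1) * (x * star a + y * star b) * a) *
        star (x + (l + 1) * (x * star a + y * star b) * a) +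
      (y + (l + 1) * (x * star a + y * star b) * b) *
        star (y + (l + 1) * (x * star a + y * star b) * b) = 1 := by
    intro x y l hl hxy
    simp only [star_add, star_mul', star_star, star_one]
    linear_combination hxy
      + (l + 1) * (star l + 1) * (x * star a + y * star b) * (star x * a + star y * b) * hab
      + (x * star a + y * star b) * (star x * a + star y * b) * hl
      + (x * star a + y * star b) * (star x * a + star y * b) * (l + star l + 2) * two
  -- the reflection with multiplier `star l` is inverse to the one with multiplier `l`
  have hinv : ∀ x y l : F, l * star l = 1 →
      (x + (l + 1) * (x * star a + y * star b) * a, y + (l + 1) * (x * star a + y * star b) * b) ∈ X →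
      (x, y) ∈ X := by
    intro x y l hl h
    have := h3 _ _ (star l) (hU l hl) h
    convert this using 2
    · linear_combination -(x * star a + y * star b) * a * (l + 1) * (star l + 1) * hab
        - (x * star a + y * star b) * a * hl
        - (x * star a + y * star b) * a * (l + star l + 1) * two
        - (x * star a + y * star b) * a * two
    · linear_combination -(x * star a + y * star b) * b * (l + 1) * (star l + 1) * hab
        - (x * star a + y * star b) * b * hl
        - (x * star a + y * star b) * b * (l + star l + 1) * two
        - (x * star a + y * star b) * b * two
  obtain ⟨mu, hmu, hmu1⟩ := hF.exists_ne_one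
  have hne : 1 + (mu + 1) * (b * star b) ≠ 0 := by
    intro h
    have h' := congrArg star h
    simp only [star_add, star_mul', star_star, star_one, star_zero] at h'
    have h'' : (mu - star mu) * (b * star b) = 0 := by linear_combination h - h'
    have hbb : b * star b ≠ 0 := fun h => hb (eq_zero_of_norm h)
    have h7 := (mul_eq_zero.1 h'').resolve_right hbb
    have h8 : (mu + 1) * (mu + 1) = 0 := by
      linear_combination mu * h7 + hmu + (mu + 1) * two
    exact hmu1 (hF.eq_of_add (mul_self_eq_zero.1 h8))
  have hmu2 : mu + 1 ≠ 0 := fun h => hmu1 (hF.eq_of_add h)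
  have hgen : ∀ x y : F, x ≠ 0 → y ≠ 0 → x * star x + y * star y = 1 → (x, y) ∈ X := by
    intro x y hx hy hxy
    by_contra hX
    set A : Set F := {s | ∃ x y, (x, y) ∈ X ∧ x * star x + y * star y = 1 ∧ y * star y = s} with hA
    have hr : (b * star b) * (a * star a) ≠ 0 :=
      mul_ne_zero (fun h => hb (eq_zero_of_norm h)) (fun h => ha (eq_zero_of_norm h))
    have c1 := hF.trace_card 0 _ hr
    set z : F := (mu + 1) * x * star a * b * star (y * (1 + (mu + 1) * (b * star b))) with hz
    have hz0 : z ≠ 0 :=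
      mul_ne_zero (mul_ne_zero (mul_ne_zero (mul_ne_zero hmu2 hx) (star_ne_zero.2 ha)) hb)
        (star_ne_zero.2 (mul_ne_zero hy hne))
    set c : F := (y * (1 + (mu + 1) * (b * star b))) * star (y * (1 + (mu + 1) * (b * star b))) +
      ((mu + 1) * x * star a * b) * star ((mu + 1) * x * star a * b) with hc
    have c2 := hF.trace_card c z hz0
    set I1 : Set F := {s | ∃ l, l * star l = 1 ∧
      s = 0 + (l * (b * star b * (a * star a)) + star (l * (b * star b * (a * star a))))} with hI1
    set I2 : Set F := {s | ∃ l, l * star l = 1 ∧ s = c + (l * z + star (l * z))} with hI2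
    have i1 : I1 ⊆ A := by
      rintro s ⟨l, hl, rfl⟩
      refine ⟨_, _, h3 1 0 l hl h4, hunit 1 0 l hl (by simp), ?_⟩
      simp only [star_add, star_mul', star_star, star_one, star_zero]
      linear_combination a * star a * b * star b * hl + a * star a * b * star b * two
    have i2 : ∀ s ∈ I2, s ∉ A := by
      rintro s ⟨l, hl, rfl⟩ ⟨x', y', hX', hu', hy'⟩
      apply hX
      have hlx : (l * x) * star (l * x) + y * star y = 1 := by
        rw [star_mul']; linear_combination hxy + x * star x * hl
      have hu := hunit (l * x) y mu hmu hlx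
      have hyy : (y + (mu + 1) * (l * x * star a + y * star b) * b) *
          star (y + (mu + 1) * (l * x * star a + y * star b) * b) = y' * star y' := by
        rw [hy', hc, hz]
        simp only [star_add, star_mul', star_star, star_one]
        linear_combination (mu + 1) * (star mu + 1) * x * star x * a * star a * b * star b * hl
      have hin := h6 x' y' (l * x + (mu + 1) * (l * x * star a + y * star b) * a)
        (y + (mu + 1) * (l * x * star a + y * star b) * b) hX'
        (by linear_combination hu - hu' - hyy) hyy
      have := h5 _ _ (star l) 1 (hU l hl) (by simp) (hinv _ _ mu hmu hin)
      rwa [one_mul, show star l * (l * x) = x by linear_combination x * hl] at this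
    have hsub : I1 ∪ I2 ⊆ {s : F | star s = s} := by
      rintro s (⟨l, hl, rfl⟩ | ⟨l, hl, rfl⟩)
      · simp only [Set.mem_ofPred_eq, star_add, star_mul', star_star, star_zero]
        ring
      · simp only [Set.mem_ofPred_eq, star_add, star_mul', star_star, hc]
        ring
    have hdis : Disjoint I1 I2 :=
      Set.disjoint_left.2 fun s hs1 hs2 => i2 s hs2 (i1 hs1)
    have h7 := Set.ncard_le_ncard hsub (Set.toFinite _)
    rw [Set.ncard_union_eq hdis (Set.toFinite _) (Set.toFinite _)] at h7
    have h8 : Set.ncard {s : F | star s = s} ≤ q := hF.cardFix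
    omega
  by_cases hx : x = 0
  · subst hx
    have hy : y ≠ 0 := by rintro rfl; simp at hxy
    apply hinv 0 y mu hmu
    refine hgen _ _ ?_ ?_ (hunit 0 y mu hmu hxy)
    · rw [zero_mul, zero_add, zero_add]
      exact mul_ne_zero (mul_ne_zero hmu2 (mul_ne_zero hy (star_ne_zero.2 hb))) ha
    · rw [show y + (mu + 1) * (0 * star a + y * star b) * b = y * (1 + (mu + 1) * (b * star b)) by ring]
      exact mul_ne_zero hy hne
  by_cases hy : y = 0
  · subst hy
    exact h6 1 0 x 0 h4 (by simpa using hxy) rfl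
  exact hgen x y hx hy hxy

end Plane

/-! ### Overgroups of the monomial group -/

section Monomial

open Matrix

variable {F : Type*} [Field F] [StarRing F] {q : ℕ}

/-- `K` is a set of unitary matrices, closed under products and inverses, which contains all
monomial unitary matrices. -/
structure MonoSet (K : Set (Matrix (Fin 3) (Fin 3) F)) : Prop where
  mul : ∀ A ∈ K, ∀ B ∈ K, A * B ∈ K
  adj : ∀ A ∈ K, Aᴴ ∈ K
  unit : ∀ A ∈ K, A * Aᴴ = 1
  diag : ∀ d : Fin 3 → F, (∀ i, d i * star (d i) = 1) → diagonal d ∈ K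
  perm : ∀ s : Equiv.Perm (Fin 3), (1 : Matrix (Fin 3) (Fin 3) F).submatrix s id ∈ K

/-- The unitary reflection with center `v` (a unit vector) and multiplier `m`. The usual
coefficient `m - 1` is written as `m + 1` because it is used in characteristic two only. -/
def refl (v : Fin 3 → F) (m : F) : Matrix (Fin 3) (Fin 3) F :=
  1 + (m + 1) • vecMulVec v (star v)

lemma exists_third : ∀ i j : Fin 3, ∃ k : Fin 3, k ≠ i ∧ k ≠ j := by decide

lemma exists_perm_three : ∀ i j k : Fin 3, i ≠ j → k ≠ i → k ≠ j →
    ∃ s : Equiv.Perm (Fin 3), s 0 = i ∧ s 1 = j ∧ s 2 = k := by decide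

lemma refl_mulVec (v x : Fin 3 → F) (m : F) :
    refl v m *ᵥ x = x + ((m + 1) * (star v ⬝ᵥ x)) • v := by
  rw [refl, add_mulVec, one_mulVec, smul_mulVec, vecMulVec_mulVec, op_smul_eq_smul, smul_smul]

lemma refl_apply (v : Fin 3 → F) (m : F) (i j : Fin 3) :
    refl v m i j = (1 : Matrix (Fin 3) (Fin 3) F) i j + (m + 1) * (v i * star (v j)) := rfl

/-- The unit vectors that are the center of a full group of reflections in `K`. -/
def centers (K : Set (Matrix (Fin 3) (Fin 3) F)) : Set (Fin 3 → F) :=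
  {v | star v ⬝ᵥ v = 1 ∧ ∀ m : F, m * star m = 1 → refl v m ∈ K}

namespace MonoSet

variable {K : Set (Matrix (Fin 3) (Fin 3) F)}

lemma unit' (hK : MonoSet K) {A : Matrix (Fin 3) (Fin 3) F} (hA : A ∈ K) : Aᴴ * A = 1 :=
  mul_eq_one_comm.1 (hK.unit A hA)

lemma mulVec_mem (hK : MonoSet K) {A : Matrix (Fin 3) (Fin 3) F} (hA : A ∈ K) {v : Fin 3 → F}
    (hv : v ∈ centers K) : A *ᵥ v ∈ centers K := by
  refine ⟨?_, fun m hm => ?_⟩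
  · rw [star_mulVec, ← dotProduct_mulVec, mulVec_mulVec, hK.unit' hA, one_mulVec, hv.1]
  · have h : refl (A *ᵥ v) m = A * refl v m * Aᴴ := by
      rw [refl, refl, Matrix.mul_add, Matrix.add_mul, Matrix.mul_one, hK.unit A hA,
        Matrix.mul_smul, Matrix.smul_mul, mul_vecMulVec, vecMulVec_mul, star_mulVec]
    rw [h]
    exact hK.mul _ (hK.mul _ hA _ (hv.2 m hm)) _ (hK.adj _ hA)

lemma comp_mem (hK : MonoSet K) (s : Equiv.Perm (Fin 3)) {v : Fin 3 → F}
    (hv : v ∈ centers K) : v ∘ s ∈ centers K := by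
  convert hK.mulVec_mem (hK.perm s) hv using 1
  ext i
  simp [mulVec, dotProduct, Matrix.one_apply]

lemma diag_mem (hK : MonoSet K) {d : Fin 3 → F} (hd : ∀ i, d i * star (d i) = 1) {v : Fin 3 → F}
    (hv : v ∈ centers K) : d * v ∈ centers K := by
  convert hK.mulVec_mem (hK.diag d hd) hv using 1
  ext i
  simp [mulVec_diagonal]

lemma basis_mem (hF : Herm F q) (hK : MonoSet K) : ![1, 0, 0] ∈ centers K := by
  refine ⟨by simp [dotProduct, Fin.sum_univ_three], fun m hm => ?_⟩
  convert hK.diag ![m, 1, 1] (fun i => by fin_cases i <;> simp [hm]) using 1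
  ext i j
  fin_cases i <;> fin_cases j <;> simp [refl_apply]
  linear_combination hF.two

/-- Propagation along a plane containing the first basis vector. -/
lemma centers_fill (hF : Herm F q) (hK : MonoSet K) (p r a b : F) (ha : a ≠ 0) (hb : b ≠ 0)
    (hpr : p * star p + r * star r = 1) (hab : ![a, b * p, b * r] ∈ centers K)
    (x y : F) (hxy : x * star x + y * star y = 1) : ![x, y * p, y * r] ∈ centers K := by
  refine hF.fill {z | ![z.1, z.2 * p, z.2 * r] ∈ centers K} a b ha hb ?_ ?_ ?_ ?_ ?_ x y hxy
  · have := hab.1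
    simp [dotProduct, Fin.sum_univ_three] at this
    linear_combination this - b * star b * hpr
  · intro x y l hl h
    have := hK.diag_mem (d := ![l, l, l]) (fun i => by fin_cases i <;> simp [hl]) h
    show ![l * x, l * y * p, l * y * r] ∈ centers K
    convert this using 1
    ext i; fin_cases i <;> simp [mul_assoc]
  · intro x y l hl h
    have := hK.diag_mem (d := ![l, 1, 1]) (fun i => by fin_cases i <;> simp [hl]) h
    show ![l * x, y * p, y * r] ∈ centers K
    convert this using 1
    ext i; fin_cases i <;> simp
  · intro x y l hl h
    have := hK.mulVec_mem (hab.2 l hl) h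
    rw [refl_mulVec] at this
    show ![x + (l + 1) * (x * star a + y * star b) * a,
      (y + (l + 1) * (x * star a + y * star b) * b) * p,
      (y + (l + 1) * (x * star a + y * star b) * b) * r] ∈ centers K
    convert this using 1
    ext i; fin_cases i <;> simp only [dotProduct, Fin.sum_univ_three, Pi.add_apply, Pi.smul_apply,
        Pi.star_apply, smul_eq_mul, Fin.zero_eta, Fin.mk_one, Fin.reduceFinMk, cons_val, star_mul']
    · linear_combination (-(l + 1) * a * star b * y) * hpr
    · linear_combination (-(l + 1) * b * p * star b * y) * hpr
    · linear_combination (-(l + 1) * b * r * star b * y) * hpr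
  · simpa using hK.basis_mem hF

/-- A center with entries of different norm yields a center in the plane of the first two basis
vectors. -/
lemma exists_plane_of_ne (hF : Herm F q) (hK : MonoSet K) (v : Fin 3 → F) (hv : v ∈ centers K)
    (h0 : v 0 ≠ 0) (h1 : v 1 ≠ 0) (h12 : v 1 * star (v 1) + v 2 * star (v 2) ≠ 0) :
    ∃ a b : F, a ≠ 0 ∧ b ≠ 0 ∧ ![a, b, 0] ∈ centers K := by
  by_cases h2 : v 2 = 0
  · refine ⟨v 0, v 1, h0, h1, ?_⟩
    convert hv using 1
    ext i; fin_cases i <;> simp [h2]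
  obtain ⟨w, hw⟩ := hF.normSurj (v 1 * star (v 1) + v 2 * star (v 2)) (by simp [mul_comm])
  have hw0 : w ≠ 0 := by rintro rfl; apply h12; rw [← hw]; simp
  have hw0' : star w ≠ 0 := star_ne_zero.2 hw0
  have h := hK.centers_fill hF (v 1 / w) (v 2 / w) (v 0) w h0 hw0
    (by rw [star_div₀, star_div₀]; field_simp; rw [← hw]) (by
      convert hv using 1
      ext i; fin_cases i <;> simp <;> field_simp) 0 1 (by simp)
  refine ⟨v 1 / w, v 2 / w, div_ne_zero h1 hw0, div_ne_zero h2 hw0, ?_⟩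
  convert hK.comp_mem (finRotate 3) h using 1
  ext i; fin_cases i <;> simp

/-- A center with two nonzero entries yields a center in the plane of the first two basis
vectors. -/
lemma exists_plane (hF : Herm F q) (hK : MonoSet K) (v : Fin 3 → F) (hv : v ∈ centers K)
    (i j : Fin 3) (hij : i ≠ j) (hi : v i ≠ 0) (hj : v j ≠ 0) :
    ∃ a b : F, a ≠ 0 ∧ b ≠ 0 ∧ ![a, b, 0] ∈ centers K := by
  -- permute the coordinates
  have key : ∀ v ∈ centers K, ∀ i j k : Fin 3, i ≠ j → k ≠ i → k ≠ j → v i ≠ 0 → v j ≠ 0 →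
      v j * star (v j) + v k * star (v k) ≠ 0 →
      ∃ a b : F, a ≠ 0 ∧ b ≠ 0 ∧ ![a, b, 0] ∈ centers K := by
    intro v hv i j k hij hki hkj hi hj hjk
    obtain ⟨s, h0, h1, h2⟩ : ∃ s : Equiv.Perm (Fin 3), s 0 = i ∧ s 1 = j ∧ s 2 = k := by
      exact exists_perm_three i j k hij hki hkj
    exact hK.exists_plane_of_ne hF (v ∘ s) (hK.comp_mem s hv) (by simpa [h0] using hi)
      (by simpa [h1] using hj) (by simpa [h1, h2] using hjk)
  obtain ⟨k, hki, hkj⟩ : ∃ k : Fin 3, k ≠ i ∧ k ≠ j := exists_third i j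
  by_cases h1 : v j * star (v j) + v k * star (v k) ≠ 0
  · exact key v hv i j k hij hki hkj hi hj h1
  by_cases h2 : v i * star (v i) + v k * star (v k) ≠ 0
  · exact key v hv j i k hij.symm hkj hki hj hi h2
  push Not at h1 h2
  have two := hF.two
  -- all entries have the same norm, which is then one
  have hv1 : v i * star (v i) + v j * star (v j) + v k * star (v k) = 1 := by
    rw [← hv.1]
    obtain ⟨s, h0, h1, h2⟩ := exists_perm_three i j k hij hki hkj
    rw [← h0, ← h1, ← h2, dotProduct, ← Equiv.sum_comp s, Fin.sum_univ_three]
    simp only [Pi.star_apply]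
    ring
  have hni : v i * star (v i) = 1 := by linear_combination hv1 - h1
  have hnj : v j * star (v j) = 1 := by linear_combination hv1 - h2
  have hnk : v k * star (v k) = 1 := by
    linear_combination h1 - hnj - two
  obtain ⟨mu, hmu, hmu1⟩ := hF.exists_ne_one
  have hmu2 : mu + 1 ≠ 0 := fun h => hmu1 (hF.eq_of_add h)
  have h := hK.mulVec_mem (hv.2 mu hmu) (hK.basis_mem hF)
  rw [refl_mulVec] at h
  have hn : ∀ l, v l * star (v l) = 1 := by
    intro l
    have : ∀ i j k : Fin 3, i ≠ j → k ≠ i → k ≠ j → ∀ l, l = i ∨ l = j ∨ l = k := by decide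
    rcases this i j k hij hki hkj l with rfl | rfl | rfl <;> assumption
  have hne : ∀ l, v l ≠ 0 := fun l h => by simpa [h] using hn l
  set w := ![1, 0, 0] + ((mu + 1) * (star v ⬝ᵥ ![1, 0, 0])) • v with hw
  have hwl : ∀ l, w l = (![1, 0, 0] : Fin 3 → F) l + (mu + 1) * star (v 0) * v l := by
    intro l
    simp only [hw, Pi.add_apply, Pi.smul_apply, smul_eq_mul]
    simp [dotProduct, Fin.sum_univ_three]
  have hw0 : w 0 = mu := by
    rw [hwl]
    simp only [cons_val]
    linear_combination two + (mu + 1) * hn 0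
  have hw1 : w 1 = (mu + 1) * star (v 0) * v 1 := by
    rw [hwl]; simp
  have hw2 : w 2 = (mu + 1) * star (v 0) * v 2 := by
    rw [hwl]; simp
  refine key w h 1 0 2 (by decide) (by decide) (by decide) ?_ ?_ ?_
  · rw [hw1]
    exact mul_ne_zero (mul_ne_zero hmu2 (star_ne_zero.2 (hne 0))) (hne 1)
  · rw [hw0]; rintro rfl; simp at hmu
  · rw [hw0, hw2]
    simp only [star_mul', star_add, star_star, star_one]
    intro h0
    -- `mu` would be a root of `X ^ 2 + X + 1`
    have h3 : mu ^ 2 + mu + 1 = 0 := by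
      linear_combination mu * h0 - mu * hmu
        - mu * (mu + 1) * (star mu + 1) * (v 2 * star (v 2) * hn 0 + hn 2)
        - (mu + 1) * hmu - mu * two
    exact hmu1 (hF.cube mu hmu (by linear_combination (mu - 1) * h3))

lemma one_mem (hK : MonoSet K) : 1 ∈ K := by
  have := hK.diag (fun _ => 1) (by simp)
  rwa [diagonal_one] at this

lemma perm_mulVec {R : Type*} [Field R] (s : Equiv.Perm (Fin 3)) (v : Fin 3 → R) :
    (1 : Matrix (Fin 3) (Fin 3) R).submatrix s id *ᵥ v = v ∘ s := by
  ext i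
  simp [mulVec, dotProduct, Matrix.one_apply]

lemma exists_mulVec_plane (hF : Herm F q) (hK : MonoSet K) (a b : F) (ha : a ≠ 0) (hb : b ≠ 0)
    (hab : ![a, b, 0] ∈ centers K) (x y : F) (hxy : x * star x + y * star y = 1) :
    ∃ M ∈ K, M *ᵥ ![1, 0, 0] = ![x, y, 0] ∧ M *ᵥ ![0, 0, 1] = ![0, 0, 1] := by
  have hcomp : ∀ A ∈ K, A *ᵥ ![0, 0, 1] = ![0, 0, 1] → ∀ z z' : Fin 3 → F, A *ᵥ z = z' →
      (∃ M ∈ K, M *ᵥ ![1, 0, 0] = z ∧ M *ᵥ ![0, 0, 1] = ![0, 0, 1]) →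
      ∃ M ∈ K, M *ᵥ ![1, 0, 0] = z' ∧ M *ᵥ ![0, 0, 1] = ![0, 0, 1] := by
    rintro A hA hA1 z z' rfl ⟨M, hM, rfl, hM2⟩
    exact ⟨A * M, hK.mul _ hA _ hM, (mulVec_mulVec _ _ _).symm, by rw [← mulVec_mulVec, hM2, hA1]⟩
  refine hF.fill {z | ∃ M ∈ K, M *ᵥ ![1, 0, 0] = ![z.1, z.2, 0] ∧ M *ᵥ ![0, 0, 1] = ![0, 0, 1]}
    a b ha hb ?_ ?_ ?_ ?_ ?_ x y hxy
  · have := hab.1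
    simp [dotProduct, Fin.sum_univ_three] at this
    linear_combination this
  · intro x y l hl
    refine hcomp (diagonal ![l, l, 1]) (hK.diag _ fun i => by fin_cases i <;> simp [hl]) ?_ _ _ ?_
    · ext i; fin_cases i <;> simp [mulVec_diagonal]
    · ext i; fin_cases i <;> simp [mulVec_diagonal]
  · intro x y l hl
    refine hcomp (diagonal ![l, 1, 1]) (hK.diag _ fun i => by fin_cases i <;> simp [hl]) ?_ _ _ ?_
    · ext i; fin_cases i <;> simp [mulVec_diagonal]
    · ext i; fin_cases i <;> simp [mulVec_diagonal]
  · intro x y l hl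
    refine hcomp _ (hab.2 l hl) ?_ _ _ ?_
    · rw [refl_mulVec]
      simp [dotProduct, Fin.sum_univ_three]
    · rw [refl_mulVec]
      ext i; fin_cases i <;> simp only [dotProduct, Fin.sum_univ_three, Pi.add_apply, Pi.smul_apply,
        Pi.star_apply, smul_eq_mul, Fin.zero_eta, Fin.mk_one, Fin.reduceFinMk, cons_val] <;> ring
  · exact ⟨1, hK.one_mem, by simp, by simp⟩

/-- `K` is transitive on unit vectors. -/
lemma exists_mulVec (hF : Herm F q) (hK : MonoSet K) (a b : F) (ha : a ≠ 0) (hb : b ≠ 0)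
    (hab : ![a, b, 0] ∈ centers K) (v : Fin 3 → F)
    (hv : v 0 * star (v 0) + v 1 * star (v 1) + v 2 * star (v 2) = 1) :
    ∃ M ∈ K, M *ᵥ ![1, 0, 0] = v := by
  have two := hF.two
  have hcomp : ∀ A ∈ K, ∀ z, (∃ M ∈ K, M *ᵥ ![1, 0, 0] = z) →
      ∃ M ∈ K, M *ᵥ ![1, 0, 0] = A *ᵥ z := by
    rintro A hA z ⟨M, hM, rfl⟩
    exact ⟨A * M, hK.mul _ hA _ hM, (mulVec_mulVec _ _ _).symm⟩
  have hplane := hK.exists_mulVec_plane hF a b ha hb hab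
  have c1 : ∀ v : Fin 3 → F, v 0 * star (v 0) + v 1 * star (v 1) + v 2 * star (v 2) = 1 →
      v 0 * star (v 0) + v 1 * star (v 1) ≠ 0 → ∃ M ∈ K, M *ᵥ ![1, 0, 0] = v := by
    intro v hv h01
    obtain ⟨w, hw⟩ := hF.normSurj (v 0 * star (v 0) + v 1 * star (v 1)) (by simp [mul_comm])
    have hw0 : w ≠ 0 := by rintro rfl; apply h01; rw [← hw]; simp
    have hw0' : star w ≠ 0 := star_ne_zero.2 hw0
    obtain ⟨M, hM, h1, h2⟩ := hplane (v 0 / w) (v 1 / w)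
      (by rw [star_div₀, star_div₀]; field_simp; rw [← hw])
    obtain ⟨M', hM', h1', -⟩ := hplane w (v 2) (by rw [hw, hv])
    have h3 := hcomp M hM _ (hcomp _ (hK.perm (Equiv.swap 1 2)) _ ⟨M', hM', h1'⟩)
    have h4 : ![w, v 2, 0] ∘ ⇑(Equiv.swap (1 : Fin 3) 2) =
        w • ![1, 0, 0] + v 2 • ![0, 0, 1] := by
      ext i; fin_cases i <;> simp [Equiv.swap_apply_of_ne_of_ne]
    rw [perm_mulVec, h4, mulVec_add, mulVec_smul, mulVec_smul, h1, h2] at h3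
    convert h3 using 4
    ext i; fin_cases i <;> simp <;> field_simp
  have c2 : ∀ v : Fin 3 → F, v 0 * star (v 0) + v 1 * star (v 1) + v 2 * star (v 2) = 1 →
      ∀ s : Equiv.Perm (Fin 3), v (s 0) * star (v (s 0)) + v (s 1) * star (v (s 1)) ≠ 0 →
      ∃ M ∈ K, M *ᵥ ![1, 0, 0] = v := by
    intro v hv s hs
    have h1 := c1 (v ∘ s) (by
      rw [← hv, ← Fin.sum_univ_three (fun i => v i * star (v i)), ← Equiv.sum_comp s,
        Fin.sum_univ_three]
      rfl) hs
    have h2 := hcomp _ (hK.perm s⁻¹) _ h1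
    rw [perm_mulVec] at h2
    convert h2 using 4
    ext i; simp
  by_cases h01 : v 0 * star (v 0) + v 1 * star (v 1) ≠ 0
  · exact c1 v hv h01
  by_cases h02 : v 0 * star (v 0) + v 2 * star (v 2) ≠ 0
  · exact c2 v hv (Equiv.swap 1 2) (by simpa [Equiv.swap_apply_of_ne_of_ne] using h02)
  push Not at h01 h02
  have hn0 : v 0 * star (v 0) = 1 := by
    linear_combination h01 + h02 - hv - two
  have hn1 : v 1 * star (v 1) = 1 := by
    linear_combination h01 - hn0 - two
  have hn2 : v 2 * star (v 2) = 1 := by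
    linear_combination h02 - hn0 - two
  have hv0 : v 0 ≠ 0 := by rintro h; simp [h] at hn0
  have hv1 : v 1 ≠ 0 := by rintro h; simp [h] at hn1
  have hab1 : a * star a + b * star b = 1 := by
    have := hab.1
    simp [dotProduct, Fin.sum_univ_three] at this
    linear_combination this
  -- move `v` to a vector with entries of different norm
  obtain ⟨l, hl, htr⟩ := hF.exists_trace_ne (star a * v 0 * b * star (v 1))
    (mul_ne_zero (mul_ne_zero (mul_ne_zero (star_ne_zero.2 ha) hv0) hb) (star_ne_zero.2 hv1))
  obtain ⟨M, hM, h1, h2⟩ := hplane a (l * b)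
    (by rw [star_mul']; linear_combination hab1 + b * star b * hl)
  have hcol : ∀ z : Fin 3 → F, (Mᴴ *ᵥ v) ⬝ᵥ star z = v ⬝ᵥ star (M *ᵥ z) := by
    intro z
    rw [star_mulVec, dotProduct_comm v, ← dotProduct_mulVec, dotProduct_comm]
  have hu0 : (Mᴴ *ᵥ v) 0 = star a * v 0 + star (l * b) * v 1 := by
    have := hcol ![1, 0, 0]
    rw [h1] at this
    simp [dotProduct, Fin.sum_univ_three] at this
    rw [this]; simp; ring
  have hu2 : (Mᴴ *ᵥ v) 2 = v 2 := by
    have := hcol ![0, 0, 1]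
    rw [h2] at this
    simpa [dotProduct, Fin.sum_univ_three] using this
  have hunit : star (Mᴴ *ᵥ v) ⬝ᵥ (Mᴴ *ᵥ v) = star v ⬝ᵥ v := by
    rw [star_mulVec, ← dotProduct_mulVec, mulVec_mulVec, conjTranspose_conjTranspose, hK.unit M hM,
      one_mulVec]
  have h3 := c2 (Mᴴ *ᵥ v) (by
    simp [dotProduct, Fin.sum_univ_three] at hunit
    linear_combination hunit + hv) (Equiv.swap 1 2) (by
    rw [Equiv.swap_apply_of_ne_of_ne (by decide) (by decide), Equiv.swap_apply_left, hu0, hu2]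
    intro h
    apply htr
    simp only [star_add, star_mul', star_star] at h ⊢
    linear_combination h - hn2 - a * star a * hn0 - b * star b * v 1 * star (v 1) * hl
      - b * star b * hn1 - hab1 - two)
  have h4 := hcomp M hM _ h3
  rwa [mulVec_mulVec, hK.unit M hM, one_mulVec] at h4

/-- A set of unitary matrices which is closed under products and inverses and properly contains
the monomial matrices contains all unitary matrices. -/
theorem eq_all (hF : Herm F q) (hK : MonoSet K) (k : Matrix (Fin 3) (Fin 3) F) (hk : k ∈ K)
    (i j l : Fin 3) (hij : i ≠ j) (hi : k i l ≠ 0) (hj : k j l ≠ 0)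
    (g : Matrix (Fin 3) (Fin 3) F) (hg : g * gᴴ = 1) : g ∈ K := by
  have hl := hK.mulVec_mem hk (hK.comp_mem (Equiv.swap 0 l) (hK.basis_mem hF))
  have hkl : ∀ i, (k *ᵥ (![1, 0, 0] ∘ Equiv.swap 0 l)) i = k i l := by
    intro i
    rw [← perm_mulVec, mulVec_mulVec]
    have : (1 : Matrix (Fin 3) (Fin 3) F).submatrix (Equiv.swap 0 l) id *ᵥ ![1, 0, 0] =
        Pi.single l 1 := by
      rw [perm_mulVec]
      ext i
      fin_cases i <;> fin_cases l <;> simp [Equiv.swap_apply_def]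
    rw [← mulVec_mulVec, this, mulVec_single_one, col_apply]
  obtain ⟨a, b, ha, hb, hab⟩ := hK.exists_plane hF _ hl i j hij (by rwa [hkl]) (by rwa [hkl])
  have hg' : gᴴ * g = 1 := mul_eq_one_comm.1 hg
  have hcol : ∀ g : Matrix (Fin 3) (Fin 3) F, gᴴ * g = 1 → ∀ i j,
      star (g 0 i) * g 0 j + star (g 1 i) * g 1 j + star (g 2 i) * g 2 j =
        (1 : Matrix (Fin 3) (Fin 3) F) i j := by
    intro g hg i j
    rw [← hg]
    simp [Matrix.mul_apply, Fin.sum_univ_three]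
  obtain ⟨M, hM, h1⟩ := hK.exists_mulVec hF a b ha hb hab (fun i => g i 0) (by
    have := hcol g hg' 0 0
    simp at this
    linear_combination this)
  set g1 := Mᴴ * g with hg1
  have hu1 : g1ᴴ * g1 = 1 := by
    rw [hg1, conjTranspose_mul, conjTranspose_conjTranspose, Matrix.mul_assoc, ← Matrix.mul_assoc M,
      hK.unit M hM, Matrix.one_mul, hg']
  have he1 : g1 *ᵥ ![1, 0, 0] = ![1, 0, 0] := by
    have : g *ᵥ ![1, 0, 0] = fun i => g i 0 := by
      ext i; simp [mulVec, dotProduct, Fin.sum_univ_three]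
    rw [hg1, ← mulVec_mulVec, this, ← h1, mulVec_mulVec, hK.unit' hM, one_mulVec]
  have hg1c : ∀ i, g1 i 0 = (![1, 0, 0] : Fin 3 → F) i := by
    intro i
    rw [← he1]; simp [mulVec, dotProduct, Fin.sum_univ_three]
  have h01 : g1 0 1 = 0 := by
    have := hcol g1 hu1 0 1
    simpa [hg1c] using this
  obtain ⟨A, hA, hA1, hA2⟩ := hK.exists_mulVec_plane hF a b ha hb hab (g1 1 1) (g1 2 1) (by
    have := hcol g1 hu1 1 1
    simp [h01] at this
    linear_combination this)
  have h0A : (![0, 1, 0] : Fin 3 → F) ∘ finRotate 3 = ![1, 0, 0] := by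
    ext i; fin_cases i <;> simp
  have h1A : (![1, 0, 0] : Fin 3 → F) ∘ finRotate 3 = ![0, 0, 1] := by
    ext i; fin_cases i <;> simp
  have h2A : (![g1 1 1, g1 2 1, 0] : Fin 3 → F) ∘ (finRotate 3).symm = ![0, g1 1 1, g1 2 1] := by
    rw [Equiv.comp_symm_eq]
    ext i; fin_cases i <;> simp
  have h3A : (![0, 0, 1] : Fin 3 → F) ∘ (finRotate 3).symm = ![1, 0, 0] := by
    rw [Equiv.comp_symm_eq]
    ext i; fin_cases i <;> simp
  obtain ⟨B, hB, hB1, hB2⟩ : ∃ B ∈ K, B *ᵥ ![0, 1, 0] = ![0, g1 1 1, g1 2 1] ∧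
      B *ᵥ ![1, 0, 0] = ![1, 0, 0] := by
    refine ⟨_, hK.mul _ (hK.mul _ (hK.perm (finRotate 3).symm) _ hA) _ (hK.perm (finRotate 3)),
      ?_, ?_⟩
    · rw [← mulVec_mulVec, ← mulVec_mulVec, perm_mulVec, perm_mulVec, h0A, hA1, h2A]
    · rw [← mulVec_mulVec, ← mulVec_mulVec, perm_mulVec, perm_mulVec, h1A, hA2, h3A]
  set g2 := Bᴴ * g1 with hg2
  have hu2 : g2ᴴ * g2 = 1 := by
    rw [hg2, conjTranspose_mul, conjTranspose_conjTranspose, Matrix.mul_assoc, ← Matrix.mul_assoc B,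
      hK.unit B hB, Matrix.one_mul, hu1]
  have hB3 : ∀ x y, B *ᵥ x = y → Bᴴ *ᵥ y = x := by
    rintro x _ rfl
    rw [mulVec_mulVec, hK.unit' hB, one_mulVec]
  have hc0 : g2 *ᵥ ![1, 0, 0] = ![1, 0, 0] := by
    rw [hg2, ← mulVec_mulVec, he1, hB3 _ _ hB2]
  have hc1 : g2 *ᵥ ![0, 1, 0] = ![0, 1, 0] := by
    have : g1 *ᵥ ![0, 1, 0] = ![0, g1 1 1, g1 2 1] := by
      ext i
      fin_cases i <;> simp [mulVec, dotProduct, Fin.sum_univ_three, h01]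
    rw [hg2, ← mulVec_mulVec, this, hB3 _ _ hB1]
  have hg2c : ∀ i, g2 i 0 = (![1, 0, 0] : Fin 3 → F) i := by
    intro i
    rw [← hc0]; simp [mulVec, dotProduct, Fin.sum_univ_three]
  have hg2d : ∀ i, g2 i 1 = (![0, 1, 0] : Fin 3 → F) i := by
    intro i
    rw [← hc1]; simp [mulVec, dotProduct, Fin.sum_univ_three]
  have h02 : g2 0 2 = 0 := by
    have := hcol g2 hu2 0 2
    simpa [hg2c] using this
  have h12 : g2 1 2 = 0 := by
    have := hcol g2 hu2 1 2
    simpa [hg2d] using this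
  have h22 : g2 2 2 * star (g2 2 2) = 1 := by
    have := hcol g2 hu2 2 2
    simp [h02, h12] at this
    linear_combination this
  have hg2K : g2 ∈ K := by
    convert hK.diag ![1, 1, g2 2 2] (fun i => by fin_cases i <;> simp [h22]) using 1
    ext i j
    fin_cases j <;> fin_cases i <;> simp [hg2c, hg2d, h02, h12]
  have : g = M * (B * g2) := by
    rw [hg2, ← Matrix.mul_assoc B, hK.unit B hB, Matrix.one_mul, hg1, ← Matrix.mul_assoc,
      hK.unit M hM, Matrix.one_mul]
  rw [this]
  exact hK.mul _ hM _ (hK.mul _ hB _ hg2K)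

end MonoSet

end Monomial

/-! ### Symmetric groups of degree three -/

section SymThree

open Matrix

variable {F : Type*} [Field F] [StarRing F] {q : ℕ}

lemma Herm.exists_form_ne (hF : Herm F q) (A : Matrix (Fin 3) (Fin 3) F) (hA : A ≠ 0) :
    ∃ x : Fin 3 → F, star x ⬝ᵥ A *ᵥ x ≠ 0 := by
  by_contra! hcon
  apply hA
  have hb : ∀ x y : Fin 3 → F, star x ⬝ᵥ A *ᵥ y + star y ⬝ᵥ A *ᵥ x = 0 := by
    intro x y
    have := hcon (x + y)
    rw [star_add, mulVec_add, add_dotProduct, dotProduct_add, dotProduct_add, hcon, hcon] at this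
    linear_combination this
  obtain ⟨l, hl, hl1⟩ := hF.exists_trace_ne 1 one_ne_zero
  have hz : ∀ x y : Fin 3 → F, star x ⬝ᵥ A *ᵥ y = 0 := by
    intro x y
    have h1 := hb x y
    have h2 := hb x (l • y)
    rw [mulVec_smul, star_smul, smul_dotProduct, dotProduct_smul, smul_eq_mul, smul_eq_mul] at h2
    have h3 : (l * 1 + star (l * 1)) * (star x ⬝ᵥ A *ᵥ y) = 0 := by
      rw [mul_one]
      linear_combination h2 - star l * h1 + star l * (star x ⬝ᵥ A *ᵥ y) * hF.two
    exact (mul_eq_zero.1 h3).resolve_left hl1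
  ext i j
  have := hz (Pi.single i 1) (Pi.single j 1)
  rw [← Pi.single_star] at this
  simpa using this

lemma form_mulVec (A B : Matrix (Fin 3) (Fin 3) F) (x y : Fin 3 → F) :
    star (A *ᵥ x) ⬝ᵥ B *ᵥ y = star x ⬝ᵥ (Aᴴ * B) *ᵥ y := by
  rw [star_mulVec, ← dotProduct_mulVec, mulVec_mulVec]

/-- A group of unitary matrices isomorphic to `Sym(3)`, generated by an involution `t` and an
element `u` of order three, permutes an orthonormal basis. The vector `v` below is the element of
this basis fixed by `t`. It is a combination of an eigenvector `f` of `u`, its image under `t`,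
and a fixed vector `e` of the group. -/
theorem Herm.exists_fixed (hF : Herm F q) (t u : Matrix (Fin 3) (Fin 3) F)
    (ht : t * tᴴ = 1) (hu : u * uᴴ = 1) (ht2 : t * t = 1) (hu3 : u * u * u = 1)
    (htu : t * u = u * u * t) (hu1 : u ≠ 1) :
    ∃ v : Fin 3 → F, t *ᵥ v = v ∧ star v ⬝ᵥ v = 1 ∧ star v ⬝ᵥ u *ᵥ v = 0 := by
  have two := hF.two
  obtain ⟨o, ho, ho1⟩ := hF.omega
  have htH : tᴴ = t := by
    calc tᴴ = t * t * tᴴ := by rw [ht2, Matrix.one_mul]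
      _ = t := by rw [Matrix.mul_assoc, ht, Matrix.mul_one]
  have huH : uᴴ = u * u := by
    have h : u * (u * u) = 1 := by rw [← Matrix.mul_assoc, hu3]
    calc uᴴ = (u * u) * (u * uᴴ) := by rw [← Matrix.mul_assoc, hu3, Matrix.one_mul]
      _ = u * u := by rw [hu, Matrix.mul_one]
  obtain ⟨w, hw⟩ : ∃ w, u * u = w := ⟨_, rfl⟩
  have hwu : w * u = 1 := by rw [← hw, hu3]
  have huw : u * w = 1 := by rw [← hw, ← Matrix.mul_assoc, hu3]
  have hww : w * w = u := by
    nth_rewrite 1 [← hw]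
    rw [Matrix.mul_assoc, huw, Matrix.mul_one]
  have huH' : uᴴ = w := by rw [huH, hw]
  have hwH : wᴴ = u := by rw [← huH', conjTranspose_conjTranspose]
  have htu' : t * u = w * t := by rw [htu, hw]
  have htw : t * w = u * t := by
    rw [← hw, ← Matrix.mul_assoc, htu', Matrix.mul_assoc, htu', ← Matrix.mul_assoc, hww]
  -- the projections to the eigenspaces of `u`
  set p0 := 1 + u + w with hp0
  set p1 := 1 + (o ^ 2) • u + o • w with hp1
  set p2 := 1 + o • u + (o ^ 2) • w with hp2
  have e1 : u * p1 = o • p1 := by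
    simp only [hp1, mul_add, mul_smul_comm, hw, huw, mul_one, smul_add, smul_smul]
    match_scalars
    · linear_combination (1 - o) * ho1
    · ring
    · ring
  have e2 : p1ᴴ = p2 := by
    simp only [hp1, hp2, conjTranspose_add, conjTranspose_smul, conjTranspose_one, huH', hwH,
      star_pow, ho]
    abel
  have e3 : p2 * p1 = 0 := by
    simp only [hp1, hp2, mul_add, add_mul, mul_smul_comm, smul_mul_assoc, hw, huw, hwu, hww, mul_one,
      one_mul, smul_add, smul_smul]
    match_scalars
    · linear_combination (o ^ 2 - o + 1) * ho1
    · linear_combination o * ho1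
    · linear_combination o * ho1
  have e4 : p2 * p0 = 0 := by
    simp only [hp0, hp2, mul_add, add_mul, smul_mul_assoc, hw, huw, hwu, hww, mul_one,
      one_mul]
    match_scalars
    · linear_combination ho1
    · linear_combination ho1
    · linear_combination ho1
  have e5 : p0ᴴ = p0 := by
    simp only [hp0, conjTranspose_add, conjTranspose_one, huH', hwH]
    abel
  have e6 : p0 * p0 = p0 := by
    have h : p0 * p0 = p0 + (2 : F) • p0 := by
      simp only [hp0, mul_add, add_mul, hw, huw, hwu, hww, mul_one, one_mul]
      module
    rw [h, two, zero_smul, add_zero]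
  have e7 : t * p0 = p0 * t := by
    simp only [hp0, mul_add, add_mul, htu', htw, mul_one, one_mul]
    abel
  have e8 : p2 * t = t * p1 := by
    simp only [hp1, hp2, mul_add, add_mul, mul_smul_comm, smul_mul_assoc, htu', htw, mul_one, one_mul]
    abel
  have e9 : p1 * p1 = p1 := by
    simp only [hp1, mul_add, add_mul, mul_smul_comm, smul_mul_assoc, hw, huw, hwu, hww, mul_one,
      one_mul, smul_add, smul_smul]
    match_scalars
    · linear_combination 2 * (o - 1) * ho1 + two
    · linear_combination o ^ 2 * two
    · linear_combination o * two + o * (o - 1) * ho1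
  have e10 : u * p0 = p0 := by
    simp only [hp0, mul_add, hw, huw, mul_one]
    abel
  have e11 : p0 + p1 + p2 = 1 := by
    simp only [hp0, hp1, hp2]
    match_scalars
    · linear_combination two
    · linear_combination ho1
    · linear_combination ho1
  have e12 : t * p1 * t = p2 := by rw [← e8, Matrix.mul_assoc, ht2, Matrix.mul_one]
  have hp1ne : p1 ≠ 0 := by
    intro h
    rw [h, Matrix.mul_zero, Matrix.zero_mul] at e12
    rw [h, ← e12, add_zero, add_zero] at e11
    rw [e11, Matrix.mul_one] at e10
    exact hu1 e10
  have hp0ne : p0 ≠ 0 := by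
    intro h
    have h1 := congrArg trace e11
    have h2 : trace p2 = trace p1 := by
      rw [← e12, trace_mul_comm, ← Matrix.mul_assoc, ht2, Matrix.one_mul]
    rw [h, zero_add, trace_add, h2, trace_one] at h1
    simp at h1
    exact one_ne_zero (by linear_combination (trace p1 - 1) * two - h1)
  have htp1 : t * p1 ≠ 0 := by
    intro h
    apply hp1ne
    rw [← Matrix.one_mul p1, ← ht2, Matrix.mul_assoc, h, Matrix.mul_zero]
  obtain ⟨x, hx⟩ := hF.exists_form_ne _ htp1
  obtain ⟨y, hy⟩ := hF.exists_form_ne _ hp0ne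
  set d := star x ⬝ᵥ (t * p1) *ᵥ x with hd
  set E := star y ⬝ᵥ p0 *ᵥ y with hE
  set f := p1 *ᵥ x with hf
  set e := p0 *ᵥ y with he
  have hadj : ∀ x y : Fin 3 → F, star (star x ⬝ᵥ y) = star y ⬝ᵥ x := by
    intro x y
    rw [star_dotProduct, star_star, dotProduct_comm]
  have ff : star f ⬝ᵥ f = 0 := by
    rw [hf, form_mulVec, e2, e3, zero_mulVec, dotProduct_zero]
  have ftf : star f ⬝ᵥ t *ᵥ f = d := by
    rw [hf, mulVec_mulVec, form_mulVec, e2, ← Matrix.mul_assoc, e8, Matrix.mul_assoc, e9]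
  have tff : star (t *ᵥ f) ⬝ᵥ f = d := by
    rw [← ftf]
    nth_rewrite 2 [← one_mulVec f]
    rw [form_mulVec, htH, Matrix.mul_one]
  have tftf : star (t *ᵥ f) ⬝ᵥ t *ᵥ f = 0 := by
    rw [form_mulVec, htH, ht2, one_mulVec, ff]
  have fe : star f ⬝ᵥ e = 0 := by
    rw [hf, form_mulVec, e2, e4, zero_mulVec, dotProduct_zero]
  have tfe : star (t *ᵥ f) ⬝ᵥ e = 0 := by
    rw [he, form_mulVec, htH, e7, hf, form_mulVec, e2, ← Matrix.mul_assoc, e4, Matrix.zero_mul,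
      zero_mulVec, dotProduct_zero]
  have ee : star e ⬝ᵥ e = E := by
    rw [he, form_mulVec, e5, e6]
  have ef : star e ⬝ᵥ f = 0 := by rw [← hadj, fe, star_zero]
  have etf : star e ⬝ᵥ t *ᵥ f = 0 := by rw [← hadj, tfe, star_zero]
  have hdd : star d = d := by rw [← ftf, hadj, tff]; rw [ftf]
  have hEE : star E = E := by rw [← ee, hadj]
  have htt : t *ᵥ t *ᵥ f = f := by rw [mulVec_mulVec, ht2, one_mulVec]
  have hue : u *ᵥ e = e := by rw [he, mulVec_mulVec, e10]
  have huf : u *ᵥ f = o • f := by rw [hf, mulVec_mulVec, e1, smul_mulVec]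
  have hutf : u *ᵥ t *ᵥ f = o ^ 2 • t *ᵥ f := by
    rw [mulVec_mulVec, ← htw, ← hw, ← mulVec_mulVec, ← mulVec_mulVec, huf, mulVec_smul, huf,
      mulVec_smul, mulVec_smul, smul_smul, pow_two]
  -- the vectors `f`, `t f`, `e` form a basis
  have hbasis : ∀ z : Fin 3 → F, star f ⬝ᵥ z = 0 → star (t *ᵥ f) ⬝ᵥ z = 0 → star e ⬝ᵥ z = 0 →
      z = 0 := by
    intro z h1 h2 h3
    set C : Matrix (Fin 3) (Fin 3) F := of ![star f, star (t *ᵥ f), star e] with hC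
    have hCC : C * Cᴴ = !![0, d, 0; d, 0, 0; 0, 0, E] := by
      have h : ∀ i j, (C * Cᴴ) i j = C i ⬝ᵥ star (C j) := fun i j => rfl
      have r0 : C 0 = star f := rfl
      have r1 : C 1 = star (t *ᵥ f) := rfl
      have r2 : C 2 = star e := rfl
      clear_value C
      rw [eta_fin_three (C * Cᴴ)]
      simp only [h, r0, r1, r2, star_star, ff, ftf, tff, tftf, fe, tfe, ef, etf, ee]
    have hdet : C.det ≠ 0 := by
      intro h
      have := congrArg det hCC
      rw [det_mul, h, zero_mul, det_fin_three] at this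
      simp at this
      rcases this with h | h
      · exact hx h
      · exact hy h
    apply eq_zero_of_mulVec_eq_zero hdet
    ext i
    fin_cases i
    · exact h1
    · exact h2
    · exact h3
  have hte : t *ᵥ e = ((star e ⬝ᵥ t *ᵥ e) / E) • e := by
    rw [← sub_eq_zero]
    apply hbasis
    · rw [dotProduct_sub, dotProduct_smul, fe, smul_zero, sub_zero]
      have h := form_mulVec t 1 f e
      rw [one_mulVec, tfe, htH, Matrix.mul_one] at h
      exact h.symm
    · rw [dotProduct_sub, dotProduct_smul, tfe, smul_zero, sub_zero, form_mulVec, htH, ht2,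
        one_mulVec, fe]
    · rw [dotProduct_sub, dotProduct_smul, ee, smul_eq_mul, div_mul_cancel₀ _ hy, sub_self]
  set c := (star e ⬝ᵥ t *ᵥ e) / E with hc
  have hene : e ≠ 0 := by
    intro h
    rw [h, dotProduct_zero] at ee
    exact hy ee.symm
  have hc1 : c = 1 := by
    have h1 : t *ᵥ t *ᵥ e = e := by rw [mulVec_mulVec, ht2, one_mulVec]
    rw [hte, mulVec_smul, hte, smul_smul] at h1
    have h2 : (c * c - 1) • e = 0 := by rw [sub_smul, h1, one_smul, sub_self]
    have h3 := (smul_eq_zero.1 h2).resolve_right hene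
    have h4 : (c - 1) * (c - 1) = 0 := by linear_combination h3 + (1 - c) * two
    exact sub_eq_zero.1 (mul_self_eq_zero.1 h4)
  rw [hc1, one_smul] at hte
  obtain ⟨a, ha⟩ := hF.normSurj E⁻¹ (by rw [star_inv₀, hEE])
  obtain ⟨b, hb⟩ := hF.normSurj d⁻¹ (by rw [star_inv₀, hdd])
  have ha' : a * star a * E = 1 := by rw [ha, inv_mul_cancel₀ hy]
  have hb' : b * star b * d = 1 := by rw [hb, inv_mul_cancel₀ hx]
  refine ⟨a • e + b • f + b • t *ᵥ f, ?_, ?_, ?_⟩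
  · simp only [mulVec_add, mulVec_smul, hte, htt]
    abel
  · simp only [star_add, star_smul, add_dotProduct, dotProduct_add, smul_dotProduct, dotProduct_smul,
      ff, ftf, tff, tftf, fe, tfe, ef, etf, ee, smul_eq_mul]
    linear_combination ha' + b * star b * d * two
  · simp only [mulVec_add, mulVec_smul, hue, huf, hutf]
    simp only [star_add, star_smul, add_dotProduct, dotProduct_add, smul_dotProduct, dotProduct_smul,
      ff, ftf, tff, tftf, fe, tfe, ef, etf, ee, smul_eq_mul]
    linear_combination ha' + (o ^ 2 + o) * hb' + ho1

end SymThree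

/-! ### The group of monomial unitary matrices -/

section Mono

open Matrix

variable {F : Type*} [Field F] [StarRing F] {q : ℕ}

/-- `A` is a monomial matrix with underlying permutation `s`. The zero matrix also satisfies this,
but the condition is used for unitary matrices only. -/
def IsMono (s : Equiv.Perm (Fin 3)) (A : Matrix (Fin 3) (Fin 3) F) : Prop :=
  ∀ i j, i ≠ s j → A i j = 0

/-- The permutation matrix of `s`, which maps the `j`-th basis vector to the `s j`-th one. -/
def pm (F : Type*) [Field F] (s : Equiv.Perm (Fin 3)) : Matrix (Fin 3) (Fin 3) F :=
  (1 : Matrix (Fin 3) (Fin 3) F).submatrix s.symm id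

lemma pm_apply (s : Equiv.Perm (Fin 3)) (i j : Fin 3) : pm F s i j = if i = s j then 1 else 0 := by
  simp [pm, Matrix.one_apply, Equiv.symm_apply_eq]

lemma isMono_pm (s : Equiv.Perm (Fin 3)) : IsMono s (pm F s) := by
  intro i j h
  rw [pm_apply, if_neg h]

lemma pm_mul (s t : Equiv.Perm (Fin 3)) : pm F (s * t) = pm F s * pm F t := by
  ext i j
  rw [mul_apply, Finset.sum_eq_single (t j)]
  · rw [pm_apply t, if_pos rfl, mul_one, pm_apply, pm_apply]
    rfl
  · intro b _ hb
    rw [pm_apply t, if_neg hb, mul_zero]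
  · simp

lemma pm_one : pm F 1 = 1 := by
  ext i j
  rw [pm_apply, Equiv.Perm.one_apply]
  rcases eq_or_ne i j with h | h
  · rw [if_pos h, h, one_apply_eq]
  · rw [if_neg h, one_apply_ne h]

lemma pm_conjTranspose (s : Equiv.Perm (Fin 3)) : (pm F s)ᴴ = pm F s⁻¹ := by
  ext i j
  simp only [conjTranspose_apply, pm_apply, Equiv.Perm.eq_inv_iff_eq]
  rw [apply_ite star, star_one, star_zero]
  simp only [eq_comm]

lemma pm_unit (s : Equiv.Perm (Fin 3)) : pm F s * (pm F s)ᴴ = 1 := by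
  rw [pm_conjTranspose, ← pm_mul, mul_inv_cancel, pm_one]

lemma Herm.det_pm (hF : Herm F q) (s : Equiv.Perm (Fin 3)) : (pm F s).det = 1 := by
  rw [pm, det_permute, det_one, mul_one]
  rcases Int.units_eq_one_or (Equiv.Perm.sign s.symm) with h | h <;> rw [h]
  · simp
  · push_cast
    linear_combination -hF.two

lemma pm_mulVec (s : Equiv.Perm (Fin 3)) (v : Fin 3 → F) : pm F s *ᵥ v = v ∘ s.symm :=
  MonoSet.perm_mulVec _ _

lemma IsMono.mul {s t : Equiv.Perm (Fin 3)} {A B : Matrix (Fin 3) (Fin 3) F} (hA : IsMono s A)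
    (hB : IsMono t B) : IsMono (s * t) (A * B) := by
  intro i j h
  rw [mul_apply]
  apply Finset.sum_eq_zero
  intro k _
  by_cases hk : k = t j
  · subst hk
    rw [hA _ _ h, zero_mul]
  · rw [hB _ _ hk, mul_zero]

lemma isMono_one : IsMono 1 (1 : Matrix (Fin 3) (Fin 3) F) := by
  rw [← pm_one]
  exact isMono_pm 1

lemma IsMono.pow {s : Equiv.Perm (Fin 3)} {A : Matrix (Fin 3) (Fin 3) F} (hA : IsMono s A) (k : ℕ) :
    IsMono (s ^ k) (A ^ k) := by
  induction k with
  | zero => simpa using isMono_one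
  | succ k ih => rw [pow_succ, pow_succ]; exact ih.mul hA

lemma IsMono.conjTranspose {s : Equiv.Perm (Fin 3)} {A : Matrix (Fin 3) (Fin 3) F}
    (hA : IsMono s A) : IsMono s⁻¹ Aᴴ := by
  intro i j h
  rw [conjTranspose_apply, hA, star_zero]
  rintro rfl
  simp at h

lemma IsMono.smul {s : Equiv.Perm (Fin 3)} {A : Matrix (Fin 3) (Fin 3) F}
    (hA : IsMono s A) (z : F) : IsMono s (z • A) := by
  intro i j h
  rw [Matrix.smul_apply, hA i j h, smul_zero]

lemma isMono_diagonal (d : Fin 3 → F) : IsMono 1 (diagonal d) := by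
  intro i j h
  exact diagonal_apply_ne _ h

lemma IsMono.norm {s : Equiv.Perm (Fin 3)} {A : Matrix (Fin 3) (Fin 3) F}
    (hA : IsMono s A) (h : A * Aᴴ = 1) (i : Fin 3) :
    A i (s.symm i) * star (A i (s.symm i)) = 1 := by
  have h1 := congrFun (congrFun h i) i
  rw [mul_apply, Finset.sum_eq_single (s.symm i), one_apply_eq, conjTranspose_apply] at h1
  · exact h1
  · intro k _ hk
    rw [hA, zero_mul]
    rintro rfl
    simp at hk
  · simp

lemma IsMono.eq {s t : Equiv.Perm (Fin 3)} {A : Matrix (Fin 3) (Fin 3) F}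
    (hA : IsMono s A) (h : A * Aᴴ = 1) (hB : IsMono t A) : s = t := by
  ext1 j
  by_contra hne
  have h1 := hA.norm h (s j)
  rw [Equiv.symm_apply_apply, hB _ _ hne, zero_mul] at h1
  exact zero_ne_one h1

lemma IsMono.eq_diagonal {s : Equiv.Perm (Fin 3)} {A : Matrix (Fin 3) (Fin 3) F}
    (hA : IsMono s A) : A = diagonal (fun i => A i (s.symm i)) * pm F s := by
  ext i j
  rw [diagonal_mul, pm_apply]
  by_cases h : i = s j
  · subst h; simp
  · rw [hA _ _ h, if_neg h, mul_zero]

lemma IsMono.eq_diagonal_one {A : Matrix (Fin 3) (Fin 3) F} (hA : IsMono 1 A) :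
    A = diagonal (fun i => A i i) := by
  ext i j
  by_cases h : i = j
  · rw [h, diagonal_apply_eq]
  · rw [hA i j h, diagonal_apply_ne _ h]

/-- A unitary matrix with at most one nonzero entry in each column is monomial. -/
lemma exists_isMono {A : Matrix (Fin 3) (Fin 3) F} (hA : A * Aᴴ = 1)
    (h : ∀ j, ∃ i, ∀ i', i' ≠ i → A i' j = 0) : ∃ s, IsMono s A := by
  choose f hf using h
  have hA' : Aᴴ * A = 1 := mul_eq_one_comm.1 hA
  have hn : ∀ j, A (f j) j ≠ 0 := by
    intro j h0
    have h1 := congrFun (congrFun hA' j) j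
    rw [mul_apply, Finset.sum_eq_zero, one_apply_eq] at h1
    · exact zero_ne_one h1
    · intro k _
      by_cases hk : k = f j
      · rw [hk, h0, mul_zero]
      · rw [hf j k hk, mul_zero]
  have hinj : Function.Injective f := by
    intro j j' hjj
    by_contra hne
    have h1 := congrFun (congrFun hA' j) j'
    rw [mul_apply, Finset.sum_eq_single (f j), one_apply_ne hne, conjTranspose_apply] at h1
    · rcases mul_eq_zero.1 h1 with h2 | h2
      · exact hn j (star_eq_zero.1 h2)
      · rw [hjj] at h2; exact hn j' h2
    · intro k _ hk
      rw [conjTranspose_apply, hf j k hk, star_zero, zero_mul]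
    · simp
  refine ⟨Equiv.ofBijective f (Finite.injective_iff_bijective.1 hinj), ?_⟩
  intro i j h
  exact hf j i h

lemma diagonal_unit {d : Fin 3 → F} (hd : ∀ i, d i * star (d i) = 1) :
    diagonal d * (diagonal d)ᴴ = 1 := by
  rw [diagonal_conjTranspose, diagonal_mul_diagonal, ← diagonal_one]
  congr 1
  ext i
  exact hd i

/-- `φ` identifies `G` with the group `SU(3)` of the standard hermitian form on `F³`. -/
structure IsSU {G : Type*} [Group G] (φ : G →* Matrix (Fin 3) (Fin 3) F) : Prop where
  inj : Function.Injective φ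
  unit : ∀ g, φ g * (φ g)ᴴ = 1
  det : ∀ g, (φ g).det = 1
  surj : ∀ A : Matrix (Fin 3) (Fin 3) F, A * Aᴴ = 1 → A.det = 1 → ∃ g, φ g = A

namespace IsSU

variable {G : Type*} [Group G] {φ : G →* Matrix (Fin 3) (Fin 3) F}

lemma unit' (h : IsSU φ) (g : G) : (φ g)ᴴ * φ g = 1 := mul_eq_one_comm.1 (h.unit g)

lemma inv (h : IsSU φ) (g : G) : φ g⁻¹ = (φ g)ᴴ := by
  calc φ g⁻¹ = φ g⁻¹ * (φ g * (φ g)ᴴ) := by rw [h.unit, Matrix.mul_one]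
    _ = (φ g)ᴴ := by rw [← Matrix.mul_assoc, ← map_mul, inv_mul_cancel, map_one, Matrix.one_mul]

/-- The monomial elements of the special unitary group. -/
def mono (h : IsSU φ) : Subgroup G where
  carrier := {g | ∃ s, IsMono s (φ g)}
  one_mem' := ⟨1, by rw [map_one]; exact isMono_one⟩
  mul_mem' := by
    rintro a b ⟨s, hs⟩ ⟨t, ht⟩
    exact ⟨s * t, by rw [map_mul]; exact hs.mul ht⟩
  inv_mem' := by
    rintro a ⟨s, hs⟩
    exact ⟨s⁻¹, by rw [h.inv]; exact hs.conjTranspose⟩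

lemma mem_mono (h : IsSU φ) {g : G} : g ∈ h.mono ↔ ∃ s, IsMono s (φ g) := Iff.rfl

/-- The diagonal elements of the special unitary group. -/
def torus (h : IsSU φ) : Subgroup G where
  carrier := {g | IsMono 1 (φ g)}
  one_mem' := by
    show IsMono 1 (φ 1)
    rw [map_one]; exact isMono_one
  mul_mem' := by
    intro a b hs ht
    show IsMono 1 (φ (a * b))
    rw [map_mul, ← one_mul 1]; exact IsMono.mul hs ht
  inv_mem' := by
    intro a hs
    show IsMono 1 (φ a⁻¹)
    rw [h.inv, ← inv_one]; exact IsMono.conjTranspose hs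

lemma mem_torus (h : IsSU φ) {g : G} : g ∈ h.torus ↔ IsMono 1 (φ g) := Iff.rfl

lemma exists_of_mono (hF : Herm F q) (h : IsSU φ) (a b : F) (ha : a * star a = 1)
    (hb : b * star b = 1) (s : Equiv.Perm (Fin 3)) :
    ∃ g, φ g = diagonal ![a, b, star (a * b)] * pm F s := by
  apply h.surj
  · rw [conjTranspose_mul, Matrix.mul_assoc, ← Matrix.mul_assoc (pm F s), pm_unit, Matrix.one_mul,
      diagonal_unit]
    intro i
    fin_cases i
    · exact ha
    · exact hb
    · show star (a * b) * star (star (a * b)) = 1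
      rw [star_star, star_mul']
      linear_combination b * star b * ha + hb
  · rw [det_mul, hF.det_pm, mul_one, det_diagonal, Fin.prod_univ_three]
    show a * b * star (a * b) = 1
    rw [star_mul']
    linear_combination b * star b * ha + hb

/-- Monomial elements with permutation in `X` are determined by this permutation and their first
two nonzero entries. -/
lemma card_mono_aux (hF : Herm F q) (h : IsSU φ) (X : Set (Equiv.Perm (Fin 3))) :
    Nat.card {g : G // ∃ s ∈ X, IsMono s (φ g)} = (q + 1) * (q + 1) * Nat.card X := by
  rw [← hF.cardU, ← Nat.card_prod, ← Nat.card_prod]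
  symm
  choose f hf using fun x : ({x : F // x * star x = 1} × {x : F // x * star x = 1}) × X =>
    exists_of_mono hF h x.1.1.1 x.1.2.1 x.1.1.2 x.1.2.2 x.2.1
  have hm : ∀ x, IsMono x.2.1 (φ (f x)) := by
    intro x
    rw [hf, ← one_mul x.2.1]
    exact (isMono_diagonal _).mul (isMono_pm _)
  refine Nat.card_congr (Equiv.ofBijective (fun x => ⟨f x, x.2.1, x.2.2, hm x⟩) ⟨?_, ?_⟩)
  · intro x y hxy
    have h1 : f x = f y := congrArg Subtype.val hxy
    have h2 : x.2.1 = y.2.1 := (hm x).eq (h.unit _) (h1 ▸ hm y)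
    have h3 := (hf x).symm.trans ((congrArg φ h1).trans (hf y))
    rw [h2] at h3
    have h4 := congrArg (· * (pm F y.2.1)ᴴ) h3
    simp only [Matrix.mul_assoc, pm_unit, Matrix.mul_one] at h4
    have h5 := diagonal_injective h4
    exact Prod.ext (Prod.ext (Subtype.ext (congrFun h5 0)) (Subtype.ext (congrFun h5 1)))
      (Subtype.ext h2)
  · rintro ⟨g, s, hs, hg⟩
    have hn := hg.norm (h.unit g)
    refine ⟨((⟨_, hn 0⟩, ⟨_, hn 1⟩), ⟨s, hs⟩), Subtype.ext (h.inj ?_)⟩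
    have hdet := h.det g
    show φ (f _) = φ g
    rw [hf]
    rw [hg.eq_diagonal, det_mul, hF.det_pm, mul_one, det_diagonal, Fin.prod_univ_three] at hdet
    refine Eq.trans ?_ hg.eq_diagonal.symm
    congr 2
    ext i
    fin_cases i
    · rfl
    · rfl
    · show star (φ g 0 (s.symm 0) * φ g 1 (s.symm 1)) = φ g 2 (s.symm 2)
      have h0 := hn 0
      have h1 := hn 1
      rw [star_mul']
      linear_combination (-star (φ g 0 (s.symm 0)) * star (φ g 1 (s.symm 1))) * hdet +
        φ g 2 (s.symm 2) * h0 * (φ g 1 (s.symm 1) * star (φ g 1 (s.symm 1))) +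
        φ g 2 (s.symm 2) * h1

lemma card_mono (hF : Herm F q) (h : IsSU φ) : Nat.card h.mono = 6 * (q + 1) ^ 2 := by
  have h1 := card_mono_aux hF h Set.univ
  have h2 : Nat.card (Set.univ : Set (Equiv.Perm (Fin 3))) = 6 := by
    rw [Nat.card_univ, Nat.card_perm, Nat.card_fin]; rfl
  rw [h2] at h1
  rw [show 6 * (q + 1) ^ 2 = (q + 1) * (q + 1) * 6 by ring, ← h1]
  apply Nat.card_congr
  apply Equiv.subtypeEquivRight
  intro g
  simp [mem_mono]

lemma card_torus (hF : Herm F q) (h : IsSU φ) : Nat.card h.torus = (q + 1) ^ 2 := by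
  have h1 := card_mono_aux hF h {1}
  have h2 : Nat.card ({1} : Set (Equiv.Perm (Fin 3))) = 1 := Nat.card_unique
  rw [h2, mul_one] at h1
  rw [pow_two, ← h1]
  apply Nat.card_congr
  apply Equiv.subtypeEquivRight
  intro g
  simp [mem_torus]

lemma torus_comm (h : IsSU φ) (x : G) (hx : x ∈ h.torus) (y : G) (hy : y ∈ h.torus) :
    x * y = y * x := by
  apply h.inj
  rw [map_mul, map_mul, IsMono.eq_diagonal_one hx, IsMono.eq_diagonal_one hy, diagonal_mul_diagonal, diagonal_mul_diagonal]
  congr 1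
  ext i
  exact mul_comm _ _

/-- An element of the torus with pairwise distinct eigenvalues. -/
lemma exists_regular (hF : Herm F q) (h : IsSU φ) (l : F) (hl : l * star l = 1) (hl1 : l ≠ 1) :
    ∃ g, φ g = diagonal ![l, star l, 1] ∧ Function.Injective ![l, star l, 1] := by
  obtain ⟨g, hg⟩ := exists_of_mono hF h l (star l) hl (by rw [star_star, mul_comm, hl]) 1
  rw [pm_one, Matrix.mul_one, hl, star_one] at hg
  refine ⟨g, hg, ?_⟩
  have h2 : l ≠ star l := by
    intro h2
    rw [← h2] at hl
    apply hl1
    have h3 : (l - 1) * (l - 1) = 0 := by linear_combination hl + (1 - l) * hF.two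
    exact sub_eq_zero.1 (mul_self_eq_zero.1 h3)
  have h3 : star l ≠ 1 := by
    intro h3
    rw [h3, mul_one] at hl
    exact hl1 hl
  intro i j hij
  fin_cases i <;> fin_cases j <;> first | rfl | (exfalso; simp_all)

lemma torusData (hF : Herm F q) (h : IsSU φ) (hq : ∃ k, q = 6 * k + 4) :
    TorusData h.torus h.mono (q + 1) where
  cop := by
    obtain ⟨k, rfl⟩ := hq
    rw [show 6 * k + 4 + 1 = 5 + 6 * k by ring, Nat.coprime_add_mul_left_left]
    norm_num
  ne_one := by have := hF.four; omega
  le := fun g hg => ⟨1, hg⟩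
  comm := h.torus_comm
  cardD := card_torus hF h
  cardN := card_mono hF h
  mem_of_pow := by
    rintro y ⟨s, hs⟩ k hk hy
    have h1 : s ^ k = 1 := by
      have h2 := hs.pow k
      rw [← map_pow, hy, map_one] at h2
      exact h2.eq (by simp) isMono_one
    have h2 : s ^ 6 = 1 := by
      have := pow_card_eq_one (x := s)
      rwa [Fintype.card_perm, Fintype.card_fin] at this
    have h3 := Nat.eq_one_of_dvd_coprimes hk (orderOf_dvd_of_pow_eq_one h1)
      (orderOf_dvd_of_pow_eq_one h2)
    rw [orderOf_eq_one_iff.1 h3] at hs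
    exact hs
  regular := by
    intro p hp hpq
    have := hF.fin
    have hcard : Nat.card (unitary F) = q + 1 := by
      rw [← hF.cardU]
      apply Nat.card_congr
      apply Equiv.subtypeEquivRight
      intro x
      rw [Unitary.mem_iff, mul_comm (star x), and_self]
    have : Fact p.Prime := ⟨hp⟩
    obtain ⟨l, hl⟩ := exists_prime_orderOf_dvd_card' (G := unitary F) p (by rw [hcard]; exact hpq)
    have hl1 : (l : F) ≠ 1 := by
      intro h1
      have : l = 1 := Subtype.ext h1
      rw [this, orderOf_one] at hl
      exact hp.one_lt.ne hl
    have hlp : (l : F) ^ p = 1 := by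
      rw [← hl, ← SubmonoidClass.coe_pow, pow_orderOf_eq_one]; rfl
    have hlu : (l : F) * star (l : F) = 1 := (Unitary.mem_iff.1 l.2).2
    obtain ⟨d, hd, hinj⟩ := exists_regular hF h l hlu hl1
    refine ⟨d, ?_, ?_, ?_⟩
    · rw [mem_torus, hd]; exact isMono_diagonal _
    · apply h.inj
      rw [map_pow, map_one, hd, diagonal_pow, ← diagonal_one]
      congr 1
      ext i
      fin_cases i
      · exact hlp
      · show star (l : F) ^ p = 1
        rw [← star_pow, hlp, star_one]
      · exact one_pow p
    · intro x hx
      rw [← inv_mem_iff]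
      apply exists_isMono (h.unit _)
      have h1 : φ x⁻¹ * φ (x * d * x⁻¹) = φ d * φ x⁻¹ := by
        rw [← map_mul, ← map_mul]; congr 1; group
      rw [IsMono.eq_diagonal_one hx, hd] at h1
      intro j
      by_contra! hcon
      obtain ⟨i, -, hi⟩ := hcon 0
      obtain ⟨i', hii, hi'⟩ := hcon i
      have e1 := congrFun (congrFun h1 i) j
      have e2 := congrFun (congrFun h1 i') j
      rw [mul_diagonal, diagonal_mul, mul_comm] at e1 e2
      exact hii (hinj ((mul_right_cancel₀ hi' e2).symm.trans (mul_right_cancel₀ hi e1)))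

lemma center_eq_bot (hF : Herm F q) (h : IsSU φ) : Subgroup.center G = ⊥ := by
  rw [eq_bot_iff]
  intro z hz
  rw [Subgroup.mem_center_iff] at hz
  rw [Subgroup.mem_bot]
  obtain ⟨l, hl, hl1⟩ := hF.exists_ne_one
  obtain ⟨d, hd, hinj⟩ := exists_regular hF h l hl hl1
  obtain ⟨c, hc⟩ := h.surj (pm F (finRotate 3)) (pm_unit _) (hF.det_pm _)
  have hdiag : ∀ i j, i ≠ j → φ z i j = 0 := by
    intro i j hij
    have h1 := congrArg φ (hz d)
    rw [map_mul, map_mul, hd] at h1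
    have h2 := congrFun (congrFun h1 i) j
    rw [mul_diagonal, diagonal_mul, mul_comm] at h2
    by_contra hne
    exact hij (hinj (mul_left_cancel₀ hne h2))
  have hz' : IsMono 1 (φ z) := hdiag
  have h1 := congrArg φ (hz c)
  rw [map_mul, map_mul, hc] at h1
  have h2 : ∀ i, φ z i i = φ z (finRotate 3 i) (finRotate 3 i) := by
    intro i
    have h3 := congrFun (congrFun h1 (finRotate 3 i)) i
    rw [hz'.eq_diagonal_one, diagonal_mul, mul_diagonal,
      pm_apply, if_pos rfl, one_mul, mul_one] at h3
    exact h3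
  have h01 : φ z 0 0 = φ z 1 1 := h2 0
  have h12 : φ z 1 1 = φ z 2 2 := h2 1
  have hdet := h.det z
  rw [hz'.eq_diagonal_one, det_diagonal,
    Fin.prod_univ_three] at hdet
  have hone : φ z 0 0 = 1 := by
    apply hF.cube (φ z 0 0) (hz'.norm (h.unit z) 0)
    have hd' : φ z 0 0 * φ z 1 1 * φ z 2 2 = 1 := hdet
    rw [← h12, ← h01] at hd'
    linear_combination hd'
  apply h.inj
  rw [map_one]
  ext i j
  by_cases hij : i = j
  · subst hij
    rw [one_apply_eq]
    fin_cases i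
    · exact hone
    · exact h01 ▸ hone
    · exact h12 ▸ h01 ▸ hone
  · rw [hdiag i j hij, one_apply_ne hij]

/-- Every unitary matrix is a scalar multiple of an element of the special unitary group, because
cubing is bijective on the scalars of norm one. -/
lemma exists_scale (hF : Herm F q) (h : IsSU φ) (A : Matrix (Fin 3) (Fin 3) F) (hA : A * Aᴴ = 1) :
    ∃ z : F, z * star z = 1 ∧ ∃ g, A = z • φ g := by
  have hdet : A.det * star A.det = 1 := by rw [← det_conjTranspose, ← det_mul, hA, det_one]
  obtain ⟨z, hz, hz3⟩ := hF.cubeRoot _ hdet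
  obtain ⟨g, hg⟩ := h.surj (star z • A) (by
      rw [conjTranspose_smul, star_star, smul_mul_smul_comm, hA, mul_comm, hz, one_smul]) (by
      rw [det_smul, Fintype.card_fin, ← hz3, ← mul_pow, mul_comm, hz, one_pow])
  exact ⟨z, hz, g, by rw [hg, smul_smul, hz, one_smul]⟩

lemma isMono_of_smul {s : Equiv.Perm (Fin 3)} {A B : Matrix (Fin 3) (Fin 3) F} {z : F}
    (hz : z * star z = 1) (hA : A = z • B) (h : IsMono s A) : IsMono s B := by
  have := h.smul (star z)
  rwa [hA, smul_smul, mul_comm, hz, one_smul] at this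

end IsSU

end Mono

/-! ### The maximal subgroups containing a symmetric group -/

section Count

open Matrix

variable {F : Type*} [Field F] [StarRing F] {q : ℕ} {G : Type*} [Group G]
  {φ : G →* Matrix (Fin 3) (Fin 3) F}

namespace IsSU

lemma scale_eq_one (hF : Herm F q) (h : IsSU φ) {z : F} (hz : z * star z = 1) {a b : G}
    (hab : φ a = z • φ b) : a = b := by
  have h1 := h.det a
  rw [hab, det_smul, h.det, mul_one, Fintype.card_fin] at h1
  rw [hF.cube z hz h1, one_smul] at hab
  exact h.inj hab

/-- The unitary reflections whose center is the vector `(1, 1, 1)`, which commute with the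
permutation matrices. The vector is a unit vector in characteristic two. -/
def cent (m : F) : Matrix (Fin 3) (Fin 3) F := refl ![1, 1, 1] m

lemma cent_apply (m : F) (i j : Fin 3) :
    cent m i j = (1 : Matrix (Fin 3) (Fin 3) F) i j + (m + 1) := by
  have h1 : ∀ i, (![1, 1, 1] : Fin 3 → F) i = 1 := by intro i; fin_cases i <;> rfl
  rw [cent, refl_apply, h1, h1, star_one, mul_one, mul_one]

lemma cent_mul (hF : Herm F q) (m k : F) : cent m * cent k = cent (m * k) := by
  ext i j
  rw [mul_apply]
  simp only [cent_apply, add_mul, mul_add, Finset.sum_add_distrib]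
  simp only [Matrix.one_apply, Fin.sum_univ_three]
  fin_cases i <;> fin_cases j <;> simp <;> linear_combination (m * k + 2 * m + 2 * k + 2) * hF.two

lemma cent_adj (m : F) : (cent m)ᴴ = cent (star m) := by
  ext i j
  rw [conjTranspose_apply, cent_apply, cent_apply, star_add, star_add, star_one]
  congr 1
  by_cases h : i = j
  · rw [h, one_apply_eq, star_one]
  · rw [one_apply_ne h, one_apply_ne (Ne.symm h), star_zero]

lemma cent_one (hF : Herm F q) : cent (1 : F) = 1 := by
  ext i j
  rw [cent_apply]
  linear_combination hF.two

lemma cent_unit (hF : Herm F q) {m : F} (hm : m * star m = 1) : cent m * (cent m)ᴴ = 1 := by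
  rw [cent_adj, cent_mul hF, hm, cent_one hF]

lemma cent_comm (m : F) (s : Equiv.Perm (Fin 3)) : cent m * pm F s = pm F s * cent m := by
  have h : ∀ A : Matrix (Fin 3) (Fin 3) F, A = 1 + (m + 1) • of (fun _ _ => 1) →
      A * pm F s = pm F s * A := by
    rintro A rfl
    rw [Matrix.add_mul, Matrix.mul_add, Matrix.one_mul, Matrix.mul_one, Matrix.smul_mul,
      Matrix.mul_smul]
    congr 2
    ext i j
    rw [mul_apply, mul_apply, Finset.sum_eq_single (s j), Finset.sum_eq_single (s.symm i)]
    · rw [pm_apply, if_pos rfl, pm_apply, if_pos (by simp), of_apply, of_apply]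
    · intro k _ hk
      rw [pm_apply, if_neg, zero_mul]
      rintro rfl
      simp at hk
    · simp
    · intro k _ hk
      rw [pm_apply, if_neg hk, mul_zero]
    · simp
  apply h
  ext i j
  rw [cent_apply, Matrix.add_apply, Matrix.smul_apply, of_apply, smul_eq_mul, mul_one]

lemma cent_mono (hF : Herm F q) {m : F} {s : Equiv.Perm (Fin 3)} (h : IsMono s (cent m)) :
    m = 1 := by
  obtain ⟨i, hi, hi'⟩ := exists_third 0 (s 0)
  have h1 := h i 0 hi'
  rw [cent_apply, one_apply_ne hi, zero_add] at h1
  exact hF.eq_of_add h1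

/-- The monomial group is a maximal subgroup: adjoining the scalars to a larger subgroup yields
a set of matrices as in `MonoSet.eq_all`. -/
lemma isCoatom_mono (hF : Herm F q) (h : IsSU φ) : IsCoatom h.mono := by
  constructor
  · intro htop
    obtain ⟨m, hm, hm1⟩ := hF.exists_ne_one
    obtain ⟨z, hz, g, hg⟩ := h.exists_scale hF _ (cent_unit hF hm)
    obtain ⟨s, hs⟩ : g ∈ h.mono := htop ▸ Subgroup.mem_top g
    apply hm1
    apply cent_mono hF (s := s)
    rw [hg]
    exact hs.smul z
  · intro K hK
    rw [eq_top_iff]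
    rintro g -
    obtain ⟨k, hk, hkN⟩ := SetLike.exists_of_lt hK
    have hmem : ∀ (A : Matrix (Fin 3) (Fin 3) F) (s : Equiv.Perm (Fin 3)), IsMono s A →
        A * Aᴴ = 1 → ∃ z : F, z * star z = 1 ∧ ∃ a ∈ K, A = z • φ a := by
      intro A s hs hA
      obtain ⟨z, hz, a, ha⟩ := h.exists_scale hF A hA
      exact ⟨z, hz, a, hK.le ⟨s, isMono_of_smul hz ha hs⟩, ha⟩
    have hMS : MonoSet {A | ∃ z : F, z * star z = 1 ∧ ∃ a ∈ K, A = z • φ a} := by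
      refine ⟨?_, ?_, ?_, ?_, ?_⟩
      · rintro _ ⟨y, hy, a, ha, rfl⟩ _ ⟨z, hz, b, hb, rfl⟩
        refine ⟨y * z, ?_, a * b, K.mul_mem ha hb, ?_⟩
        · rw [star_mul', mul_mul_mul_comm, hy, hz, one_mul]
        · rw [smul_mul_smul_comm, map_mul]
      · rintro _ ⟨y, hy, a, ha, rfl⟩
        refine ⟨star y, by rw [star_star, mul_comm, hy], a⁻¹, K.inv_mem ha, ?_⟩
        rw [conjTranspose_smul, h.inv]
      · rintro _ ⟨y, hy, a, ha, rfl⟩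
        rw [conjTranspose_smul, smul_mul_smul_comm, hy, h.unit, one_smul]
      · intro d hd
        exact hmem _ 1 (isMono_diagonal d) (diagonal_unit hd)
      · intro s
        exact hmem _ s⁻¹ (isMono_pm s⁻¹) (pm_unit s⁻¹)
    have hex : ∃ i j l, i ≠ j ∧ φ k i l ≠ 0 ∧ φ k j l ≠ 0 := by
      by_contra! hcon
      apply hkN
      apply exists_isMono (h.unit k)
      intro l
      by_contra! hc
      obtain ⟨i, -, hi⟩ := hc 0
      obtain ⟨j, hji, hj⟩ := hc i
      exact hi (hcon j i l hji hj)
    obtain ⟨i, j, l, hij, hi, hj⟩ := hex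
    obtain ⟨z, hz, a, ha, hga⟩ := hMS.eq_all hF (φ k) ⟨1, by simp, k, hk, by simp⟩ i j l hij hi hj
      (φ g) (h.unit g)
    rw [h.scale_eq_one hF hz hga]
    exact ha

/-- Every subgroup isomorphic to `Sym(3)` is conjugate to the group of permutation matrices. -/
lemma exists_conj_perm (hF : Herm F q) (h : IsSU φ) (H : Subgroup G)
    (e : H ≃* Equiv.Perm (Fin 3)) :
    ∃ g, ∀ x, x ∈ H ↔ ∃ s, φ (g⁻¹ * x * g) = pm F s := by
  let f : Equiv.Perm (Fin 3) → G := fun s => (e.symm s : G)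
  have hfm : ∀ s t, f (s * t) = f s * f t := by
    intro s t
    show ((e.symm (s * t) : H) : G) = _
    rw [map_mul]; rfl
  have hf1 : f 1 = 1 := by
    show ((e.symm 1 : H) : G) = _
    rw [map_one]; rfl
  have hfi : Function.Injective f := Subtype.val_injective.comp e.symm.injective
  have hfH : ∀ x, x ∈ H ↔ ∃ s, x = f s := by
    intro x
    constructor
    · intro hx
      exact ⟨e ⟨x, hx⟩, by show x = ((e.symm _ : H) : G); rw [e.symm_apply_apply]⟩
    · rintro ⟨s, rfl⟩
      exact (e.symm s).2
  set t := φ (f (Equiv.swap 1 2)) with ht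
  set u := φ (f (finRotate 3)) with hu
  have ht2 : t * t = 1 := by
    rw [ht, ← map_mul, ← hfm, Equiv.swap_mul_self, hf1, map_one]
  have hu3 : u * u * u = 1 := by
    rw [hu, ← map_mul, ← map_mul, ← hfm, ← hfm,
      show finRotate 3 * finRotate 3 * finRotate 3 = 1 by decide, hf1, map_one]
  have htu : t * u = u * u * t := by
    rw [hu, ht, ← map_mul, ← map_mul, ← map_mul, ← hfm, ← hfm, ← hfm,
      show Equiv.swap 1 2 * finRotate 3 = finRotate 3 * finRotate 3 * Equiv.swap 1 2 by decide]
  have hu1 : u ≠ 1 := by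
    rw [← map_one φ, ← hf1]
    intro h1
    have := hfi (h.inj h1)
    revert this
    decide
  obtain ⟨v, hv1, hv2, hv3⟩ := hF.exists_fixed t u (h.unit _) (h.unit _) ht2 hu3 htu hu1
  have huH : uᴴ = u * u := by
    have h1 : u * (u * u) = 1 := by rw [← Matrix.mul_assoc, hu3]
    calc uᴴ = (u * u) * (u * uᴴ) := by rw [← Matrix.mul_assoc, hu3, Matrix.one_mul]
      _ = u * u := by rw [h.unit, Matrix.mul_one]
  have hadj : ∀ x y : Fin 3 → F, star (star x ⬝ᵥ y) = star y ⬝ᵥ x := by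
    intro x y
    rw [star_dotProduct, star_star, dotProduct_comm]
  have hsu : ∀ x y : Fin 3 → F, star (u *ᵥ x) ⬝ᵥ u *ᵥ y = star x ⬝ᵥ y := by
    intro x y
    rw [form_mulVec, h.unit', one_mulVec]
  have huuu : ∀ x : Fin 3 → F, u *ᵥ u *ᵥ u *ᵥ x = x := by
    intro x
    rw [mulVec_mulVec, mulVec_mulVec, hu3, one_mulVec]
  have hv4 : star v ⬝ᵥ u *ᵥ u *ᵥ v = 0 := by
    rw [← hsu, huuu, ← hadj, hv3, star_zero]
  have hv3' : star (u *ᵥ v) ⬝ᵥ v = 0 := by rw [← hadj, hv3, star_zero]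
  have hv4' : star (u *ᵥ u *ᵥ v) ⬝ᵥ v = 0 := by rw [← hadj, hv4, star_zero]
  -- the columns of `A` are the vectors of the orthonormal basis
  set A : Matrix (Fin 3) (Fin 3) F := (of ![v, u *ᵥ v, u *ᵥ u *ᵥ v])ᵀ with hA
  have hcol : ∀ (B : Matrix (Fin 3) (Fin 3) F) (i j : Fin 3), (B * A) i j = (B *ᵥ A.col j) i :=
    fun B i j => rfl
  have c0 : A.col 0 = v := rfl
  have c1 : A.col 1 = u *ᵥ v := rfl
  have c2 : A.col 2 = u *ᵥ u *ᵥ v := rfl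
  have hAu : Aᴴ * A = 1 := by
    have h1 : ∀ i j, (Aᴴ * A) i j = star (A.col i) ⬝ᵥ A.col j := fun i j => rfl
    clear_value A
    rw [eta_fin_three (Aᴴ * A), eta_fin_three (1 : Matrix (Fin 3) (Fin 3) F)]
    simp only [h1, c0, c1, c2, hsu, hv2, hv3, hv4, hv3', hv4']
    rfl
  have hperm : ∀ (s : Equiv.Perm (Fin 3)) i j, (A * pm F s) i j = A.col (s j) i := by
    intro s i j
    rw [mul_apply, Finset.sum_eq_single (s j)]
    · rw [pm_apply, if_pos rfl, mul_one]; rfl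
    · intro k _ hk
      rw [pm_apply, if_neg hk, mul_zero]
    · simp
  have hcomm : ∀ (B : Matrix (Fin 3) (Fin 3) F) (s : Equiv.Perm (Fin 3)),
      (∀ j, B *ᵥ A.col j = A.col (s j)) → B * A = A * pm F s := by
    intro B s hB
    ext i j
    rw [hcol, hperm, hB]
  have hr0 : finRotate 3 0 = 1 := by decide
  have hr1 : finRotate 3 1 = 2 := by decide
  have hr2 : finRotate 3 2 = 0 := by decide
  have hs0 : Equiv.swap (1 : Fin 3) 2 0 = 0 := by decide
  have hs1 : Equiv.swap (1 : Fin 3) 2 1 = 2 := by decide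
  have hs2 : Equiv.swap (1 : Fin 3) 2 2 = 1 := by decide
  have huA : u * A = A * pm F (finRotate 3) := by
    apply hcomm
    rw [Fin.forall_fin_succ, Fin.forall_fin_two]
    show u *ᵥ A.col 0 = A.col (finRotate 3 0) ∧ u *ᵥ A.col 1 = A.col (finRotate 3 1) ∧
      u *ᵥ A.col 2 = A.col (finRotate 3 2)
    rw [hr0, hr1, hr2, c0, c1, c2]
    exact ⟨rfl, rfl, huuu v⟩
  have htuv : t *ᵥ u *ᵥ v = u *ᵥ u *ᵥ v := by
    rw [mulVec_mulVec, htu, ← mulVec_mulVec, hv1, mulVec_mulVec]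
  have htA : t * A = A * pm F (Equiv.swap 1 2) := by
    apply hcomm
    rw [Fin.forall_fin_succ, Fin.forall_fin_two]
    show t *ᵥ A.col 0 = A.col (Equiv.swap 1 2 0) ∧ t *ᵥ A.col 1 = A.col (Equiv.swap 1 2 1) ∧
      t *ᵥ A.col 2 = A.col (Equiv.swap 1 2 2)
    rw [hs0, hs1, hs2, c0, c1, c2]
    refine ⟨hv1, htuv, ?_⟩
    rw [← htuv, mulVec_mulVec, ht2, one_mulVec]
  have hgen : ∀ s : Equiv.Perm (Fin 3), ∃ i : Fin 3, ∃ j : Fin 2,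
      s = finRotate 3 ^ (i : ℕ) * Equiv.swap 1 2 ^ (j : ℕ) := by decide
  have hmulc : ∀ a b : Equiv.Perm (Fin 3), φ (f a) * A = A * pm F a → φ (f b) * A = A * pm F b →
      φ (f (a * b)) * A = A * pm F (a * b) := by
    intro a b ha hb
    rw [hfm, map_mul, Matrix.mul_assoc, hb, ← Matrix.mul_assoc, ha, pm_mul, Matrix.mul_assoc]
  have hpowc : ∀ (a : Equiv.Perm (Fin 3)) (k : ℕ), φ (f a) * A = A * pm F a →
      φ (f (a ^ k)) * A = A * pm F (a ^ k) := by
    intro a k ha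
    induction k with
    | zero => rw [pow_zero, hf1, map_one, pm_one, Matrix.one_mul, Matrix.mul_one]
    | succ k ih => rw [pow_succ]; exact hmulc _ _ ih ha
  have hall : ∀ s, φ (f s) * A = A * pm F s := by
    intro s
    obtain ⟨i, j, rfl⟩ := hgen s
    exact hmulc _ _ (hpowc _ _ huA) (hpowc _ _ htA)
  obtain ⟨z, hz, g, hg⟩ := h.exists_scale hF A (mul_eq_one_comm.1 hAu)
  have hall' : ∀ s, φ (f s) * φ g = φ g * pm F s := by
    intro s
    have h1 := congrArg (star z • ·) (hall s)
    simp only [hg, Matrix.mul_smul, Matrix.smul_mul, smul_smul] at h1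
    rw [mul_comm, hz, one_smul, one_smul] at h1
    exact h1
  have hiff : ∀ x s, φ (g⁻¹ * x * g) = pm F s ↔ x = f s := by
    intro x s
    rw [map_mul, map_mul, h.inv]
    constructor
    · intro h1
      apply h.inj
      have h2 := congrArg (fun B => φ g * B * (φ g)ᴴ) h1
      simp only [← hall', Matrix.mul_assoc, h.unit, Matrix.mul_one] at h2
      rwa [← Matrix.mul_assoc, h.unit, Matrix.one_mul] at h2
    · rintro rfl
      rw [Matrix.mul_assoc, hall', ← Matrix.mul_assoc, h.unit', Matrix.one_mul]
  exact ⟨g, fun x => by simp only [hiff]; exact hfH x⟩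

/-- If the group of permutation matrices normalizes the frame given by the columns of `A`, then
its involution fixes one of these columns, which is therefore proportional to `(a, b, b)`. Up to
a scalar this is the first column of an element of the group of reflections `cent`, and the other
columns are images of this one under cyclic shifts. -/
lemma exists_cent (hF : Herm F q) (A : Matrix (Fin 3) (Fin 3) F) (hA : A * Aᴴ = 1)
    (hmono : ∀ s, ∃ t, IsMono t (Aᴴ * pm F s * A)) :
    ∃ m : F, m * star m = 1 ∧ ∃ t, IsMono t ((cent m)ᴴ * A) := by
  have two := hF.two
  have hA' : Aᴴ * A = 1 := mul_eq_one_comm.1 hA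
  have hconj : ∀ s t, Aᴴ * pm F (s * t) * A = (Aᴴ * pm F s * A) * (Aᴴ * pm F t * A) := by
    intro s t
    rw [pm_mul]
    calc _ = Aᴴ * pm F s * 1 * pm F t * A := by simp only [Matrix.mul_one, Matrix.mul_assoc]
      _ = _ := by rw [← hA]; simp only [Matrix.mul_assoc]
  have hunit : ∀ s, (Aᴴ * pm F s * A) * (Aᴴ * pm F s * A)ᴴ = 1 := by
    intro s
    have h1 : (Aᴴ * pm F s * A)ᴴ = Aᴴ * pm F s⁻¹ * A := by
      rw [conjTranspose_mul, conjTranspose_mul, conjTranspose_conjTranspose, pm_conjTranspose,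
        Matrix.mul_assoc]
    rw [h1, ← hconj, mul_inv_cancel, pm_one, Matrix.mul_one, hA']
  choose p hp using hmono
  have hpm : ∀ s t, p (s * t) = p s * p t := by
    intro s t
    have h1 := hp (s * t)
    have h2 := h1
    rw [hconj] at h2
    have h3 := hunit (s * t)
    rw [hconj] at h3
    exact h2.eq h3 ((hp s).mul (hp t))
  have hp1 : p 1 = 1 := by
    have h1 := hpm 1 1
    rw [mul_one] at h1
    exact (left_eq_mul.1 h1)
  set c := finRotate 3 with hc
  set s : Equiv.Perm (Fin 3) := Equiv.swap 1 2 with hs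
  have hc3 : c * c * c = 1 := by rw [hc]; decide
  have hs2 : s * s = 1 := by rw [hs]; decide
  have hsc : s * c = c * c * s := by rw [hs, hc]; decide
  have hcol : ∀ (B : Matrix (Fin 3) (Fin 3) F) (t : Equiv.Perm (Fin 3)), IsMono t B → ∀ i j,
      (A * B) i j = A i (t j) * B (t j) j := by
    intro B t hB i j
    rw [mul_apply, Finset.sum_eq_single (t j)]
    · intro k _ hk
      rw [hB _ _ hk, mul_zero]
    · simp
  have hAB : ∀ t, A * (Aᴴ * pm F t * A) = pm F t * A := by
    intro t
    rw [← Matrix.mul_assoc, ← Matrix.mul_assoc, hA, Matrix.one_mul]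
  have hpmA : ∀ (t : Equiv.Perm (Fin 3)) i j, (pm F t * A) (t i) j = A i j := by
    intro t i j
    rw [mul_apply, Finset.sum_eq_single i]
    · rw [pm_apply, if_pos rfl, one_mul]
    · intro k _ hk
      rw [pm_apply, if_neg, zero_mul]
      exact fun h => hk (t.injective h.symm)
    · simp
  -- elements of order three are not diagonal
  have hpc : p c ≠ 1 := by
    intro h1
    set B := Aᴴ * pm F c * A with hB
    have hBm : IsMono 1 B := h1 ▸ hp c
    have hB3 : B * B * B = 1 := by
      rw [hB, ← hconj, ← hconj, hc3, pm_one, Matrix.mul_one, hA']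
    have hB1 : B = 1 := by
      ext i j
      by_cases hij : i = j
      · subst hij
        rw [one_apply_eq]
        apply hF.cube _ (hBm.norm (hunit c) i)
        have h3 := congrFun (congrFun hB3 i) i
        rw [hBm.eq_diagonal_one, diagonal_mul_diagonal, diagonal_mul_diagonal, diagonal_apply_eq,
          one_apply_eq] at h3
        rw [pow_succ, pow_two]
        exact h3
      · rw [hBm _ _ hij, one_apply_ne hij]
    have h3 := hAB c
    rw [← hB, hB1, Matrix.mul_one] at h3
    have h4 : pm F c = 1 := by
      rw [← Matrix.mul_one (pm F c), ← hA, ← Matrix.mul_assoc, ← h3]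
    have h5 := (isMono_pm (F := F) c).eq (pm_unit c) (h4 ▸ isMono_one)
    revert h5
    rw [hc]; decide
  have hdec : ∀ x y : Equiv.Perm (Fin 3), y ≠ 1 → y * y * y = 1 → x * x = 1 → x * y = y * y * x →
      ∃ j, x j = j ∧ ∀ k, k = j ∨ k = y j ∨ k = y (y j) := by decide
  obtain ⟨j, hj, hjk⟩ := hdec (p s) (p c) hpc (by rw [← hpm, ← hpm, hc3, hp1])
    (by rw [← hpm, hs2, hp1]) (by rw [← hpm, hsc, hpm, hpm])
  have hs0 : s 0 = 0 := by rw [hs]; decide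
  have hs1 : s 1 = 2 := by rw [hs]; decide
  have hs2' : s 2 = 1 := by rw [hs]; decide
  have hc0 : c 0 = 1 := by rw [hc]; decide
  have hc1 : c 1 = 2 := by rw [hc]; decide
  have hc2 : c 2 = 0 := by rw [hc]; decide
  -- the column `j` is fixed by the involution
  have hfix : ∀ i, A i j = A (s i) j := by
    set l := (Aᴴ * pm F s * A) j j with hl
    have h1 : ∀ i, A (s i) j * l = A i j := by
      intro i
      have h2 := hcol _ _ (hp s) (s i) j
      rw [hAB, hpmA, hj] at h2
      exact h2.symm
    have h2 : l * l = 1 := by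
      have h4 : (Aᴴ * pm F s * A) * (Aᴴ * pm F s * A) = 1 := by
        rw [← hconj, hs2, pm_one, Matrix.mul_one, hA']
      have h5 := congrFun (congrFun h4 j) j
      rw [mul_apply, Finset.sum_eq_single j, one_apply_eq] at h5
      · exact h5
      · intro k _ hk
        rw [hp s k j (by rw [hj]; exact hk), mul_zero]
      · simp
    have h3 : l = 1 := by
      have h4 : (l - 1) * (l - 1) = 0 := by linear_combination h2 + (1 - l) * two
      exact sub_eq_zero.1 (mul_self_eq_zero.1 h4)
    intro i
    rw [← h1 i, h3, mul_one]
  have hb : A 1 j = A 2 j := by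
    have := hfix 1
    rwa [hs1] at this
  obtain ⟨a, ha⟩ : ∃ a, A 0 j = a := ⟨_, rfl⟩
  obtain ⟨b, hb1⟩ : ∃ b, A 1 j = b := ⟨_, rfl⟩
  have hb2 : A 2 j = b := hb ▸ hb1
  -- the next columns are cyclic shifts of the column `j` up to scalars
  have hshift : ∀ k, ∃ l : F, ∀ i, A (c i) (p c k) = l * A i k := by
    intro k
    set y := (Aᴴ * pm F c * A) (p c k) k with hy
    have h1 : ∀ i, A (c i) (p c k) * y = A i k := by
      intro i
      have h2 := hcol _ _ (hp c) (c i) k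
      rw [hAB, hpmA] at h2
      exact h2.symm
    have hy1 := (hp c).norm (hunit c) (p c k)
    rw [Equiv.symm_apply_apply, ← hy] at hy1
    refine ⟨star y, fun i => ?_⟩
    rw [← h1 i]
    linear_combination -A (c i) (p c k) * hy1
  have hpj : p c j ≠ j := by
    intro h0
    obtain ⟨k, hk, -⟩ := exists_third j j
    rcases hjk k with h1 | h1 | h1
    · exact hk h1
    · exact hk (h1.trans h0)
    · rw [h0] at h1; exact hk (h1.trans h0)
  have hnorm : a * star a = 1 := by
    have h1 := congrFun (congrFun hA' j) j
    rw [mul_apply, Fin.sum_univ_three, one_apply_eq, conjTranspose_apply, conjTranspose_apply,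
      conjTranspose_apply, ha, hb1, hb2] at h1
    linear_combination h1 - b * star b * two
  have horth : a * star b + b * star a + b * star b = 0 := by
    have h1 := congrFun (congrFun hA' (p c j)) j
    obtain ⟨l, hl⟩ := hshift j
    have h2 := hl 0
    have h3 := hl 1
    have h4 := hl 2
    rw [hc0, ha] at h2
    rw [hc1, hb1] at h3
    rw [hc2, hb2] at h4
    have hln : l ≠ 0 := by
      intro h0
      rw [h0, zero_mul] at h2 h3 h4
      have h5 := congrFun (congrFun hA' (p c j)) (p c j)
      rw [mul_apply, Fin.sum_univ_three, one_apply_eq, h2, h3, h4, mul_zero, mul_zero, mul_zero,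
        add_zero, add_zero] at h5
      exact zero_ne_one h5
    rw [mul_apply, Fin.sum_univ_three, one_apply_ne hpj, conjTranspose_apply, conjTranspose_apply,
      conjTranspose_apply, ha, hb1, hb2, h2, h3, h4, star_mul', star_mul'] at h1
    have h5 : star l * (a * star b + b * star a + b * star b) = 0 := by linear_combination h1
    exact (mul_eq_zero.1 h5).resolve_left (fun h => hln (star_eq_zero.1 h))
  have hab : (a + b) * star (a + b) = 1 := by
    rw [star_add]
    linear_combination hnorm + horth
  obtain ⟨m, hm⟩ : ∃ m, a * star (a + b) = m := ⟨_, rfl⟩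
  have hm1 : m + 1 = b * star (a + b) := by
    rw [← hm]
    linear_combination (a * star (a + b)) * two - hab
  have hmu : m * star m = 1 := by
    rw [← hm, star_mul', star_star]
    linear_combination a * star a * hab + hnorm
  refine ⟨m, hmu, ?_⟩
  have hcu := cent_unit hF hmu
  have hcu' : (cent m)ᴴ * cent m = 1 := mul_eq_one_comm.1 hcu
  apply exists_isMono
  · rw [conjTranspose_mul, conjTranspose_conjTranspose, Matrix.mul_assoc, ← Matrix.mul_assoc A, hA,
      Matrix.one_mul, hcu']
  · have hm' : m = 1 + b * star (a + b) := by linear_combination hm1 - two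
    have key : ∀ k j : Fin 3, (∃ l : F, ∀ i, A i j = l * cent m i k) →
        ∃ i, ∀ i', i' ≠ i → ((cent m)ᴴ * A) i' j = 0 := by
      rintro k j ⟨l, hl⟩
      refine ⟨k, fun i' hi' => ?_⟩
      have h1 := congrFun (congrFun hcu' i') k
      rw [one_apply_ne hi', mul_apply] at h1
      rw [mul_apply, ← mul_zero l, ← h1, Finset.mul_sum]
      apply Finset.sum_congr rfl
      intro i _
      rw [hl]
      ring
    have hcentc : ∀ i k, cent m (c i) (c k) = cent m i k := by
      intro i k
      rw [cent_apply, cent_apply, Matrix.one_apply, Matrix.one_apply]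
      simp only [EmbeddingLike.apply_eq_iff_eq]
    have hnext : ∀ k j : Fin 3, (∃ l : F, ∀ i, A i j = l * cent m i k) →
        ∃ l : F, ∀ i, A i (p c j) = l * cent m i (c k) := by
      rintro k j ⟨l, hl⟩
      obtain ⟨y, hy⟩ := hshift j
      refine ⟨y * l, fun i => ?_⟩
      obtain ⟨i, rfl⟩ := c.surjective i
      rw [hy, hl, hcentc, mul_assoc]
    have h0 : ∃ l : F, ∀ i, A i j = l * cent m i 0 := by
      refine ⟨a + b, ?_⟩
      have e0 : A 0 j = (a + b) * cent m 0 0 := by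
        rw [ha, cent_apply, hm1, one_apply_eq]
        linear_combination -b * hab - b * two
      have e1 : A 1 j = (a + b) * cent m 1 0 := by
        rw [hb1, cent_apply, hm1, one_apply_ne (by decide), zero_add]
        linear_combination -b * hab
      have e2 : A 2 j = (a + b) * cent m 2 0 := by
        rw [hb2, cent_apply, hm1, one_apply_ne (by decide), zero_add]
        linear_combination -b * hab
      intro i
      fin_cases i
      · exact e0
      · exact e1
      · exact e2
    intro k
    rcases hjk k with rfl | rfl | rfl
    · exact key _ _ h0
    · exact key _ _ (hnext _ _ h0)
    · exact key _ _ (hnext _ _ (hnext _ _ h0))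

/-- The normalizer of the monomial group is the monomial group itself. -/
lemma mem_of_normalize (hF : Herm F q) (h : IsSU φ) (hq : ∃ k, q = 6 * k + 4) (x : G)
    (hx : ∀ y ∈ h.mono, x * y * x⁻¹ ∈ h.mono) : x ∈ h.mono := by
  have T := h.torusData hF hq
  obtain ⟨p, hp, hpq⟩ := Nat.exists_prime_and_dvd T.ne_one
  obtain ⟨d, hd, hdp, hreg⟩ := T.regular p hp hpq
  apply hreg
  apply T.mem_of_pow _ (hx d (T.le hd)) p (Nat.Coprime.coprime_dvd_left hpq T.cop)
  rw [conj_pow, hdp, mul_one, mul_inv_cancel]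

/-- The conjugate of the monomial group by `g`, which is the stabilizer of the self-polar triangle
spanned by the columns of `φ g`. -/
def frame (h : IsSU φ) (g : G) : Subgroup G := h.mono.comap (MulAut.conj g⁻¹).toMonoidHom

lemma mem_frame (h : IsSU φ) (g x : G) : x ∈ h.frame g ↔ g⁻¹ * x * g ∈ h.mono := by
  show g⁻¹ * x * g⁻¹⁻¹ ∈ h.mono ↔ _
  rw [inv_inv]

lemma isCoatom_frame (hF : Herm F q) (h : IsSU φ) (g : G) : IsCoatom (h.frame g) :=
  ((MulAut.conj g⁻¹).comapSubgroup.isCoatom_iff _).2 (h.isCoatom_mono hF)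

lemma card_frame (hF : Herm F q) (h : IsSU φ) (g : G) :
    Nat.card (h.frame g) = 6 * (q + 1) ^ 2 := by
  rw [← h.card_mono hF]
  exact Nat.card_congr ((MulAut.conj g⁻¹).toEquiv.subtypeEquiv fun x => Iff.rfl)

lemma frame_mul (h : IsSU φ) (g k : G) (hk : k ∈ h.mono) : h.frame (g * k) = h.frame g := by
  ext x
  rw [mem_frame, mem_frame, show (g * k)⁻¹ * x * (g * k) = k⁻¹ * (g⁻¹ * x * g) * k by group,
    Subgroup.mul_mem_cancel_right _ hk, Subgroup.mul_mem_cancel_left _ (inv_mem hk)]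

lemma frame_inj (hF : Herm F q) (h : IsSU φ) (hq : ∃ k, q = 6 * k + 4) (g k : G)
    (hgk : h.frame g = h.frame k) : g⁻¹ * k ∈ h.mono := by
  apply h.mem_of_normalize hF hq
  intro y hy
  have h1 : k * y * k⁻¹ ∈ h.frame k := by
    rw [mem_frame]
    convert hy using 1
    group
  rw [← hgk, mem_frame] at h1
  convert h1 using 1
  group

/-- The maximal subgroups in question are the conjugates of the monomial group. If `H` is the group
of permutation matrices, those containing `H` are its conjugates under the `q + 1` elements
proportional to some `cent m`. -/
theorem count (hF : Herm F q) (h : IsSU φ) (hq : ∃ k, q = 6 * k + 4) (H : Subgroup G)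
    (e : H ≃* Equiv.Perm (Fin 3)) :
    Nat.card {M : Subgroup G // IsCoatom M ∧ Nat.card M = 6 * (q + 1) ^ 2 ∧ H ≤ M} = q + 1 := by
  have := hF.fin
  have : Finite G := Finite.of_injective φ h.inj
  obtain ⟨g, hg⟩ := h.exists_conj_perm hF H e
  choose z hz r hr using fun m : {x : F // x * star x = 1} => h.exists_scale hF _ (cent_unit hF m.2)
  have hr' : ∀ m, φ (r m) = star (z m) • cent m.1 := by
    intro m
    rw [hr, smul_smul, mul_comm, hz, one_smul]
  have hle : ∀ k, H ≤ h.frame (g * k) ↔ ∀ s, ∃ t, IsMono t ((φ k)ᴴ * pm F s * φ k) := by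
    intro k
    have hk : ∀ x s, φ (g⁻¹ * x * g) = pm F s →
        φ ((g * k)⁻¹ * x * (g * k)) = (φ k)ᴴ * pm F s * φ k := by
      intro x s hx
      rw [show (g * k)⁻¹ * x * (g * k) = k⁻¹ * (g⁻¹ * x * g) * k by group, map_mul, map_mul, hx,
        h.inv]
    constructor
    · intro hH s
      obtain ⟨y, hy⟩ := h.surj (pm F s) (pm_unit s) (hF.det_pm s)
      have hy' : φ (g⁻¹ * (g * y * g⁻¹) * g) = pm F s := by
        rw [← hy]; congr 1; group
      have h1 := hH ((hg _).2 ⟨s, hy'⟩)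
      rw [mem_frame, mem_mono, hk _ _ hy'] at h1
      exact h1
    · intro hs x hx
      obtain ⟨s, hxs⟩ := (hg x).1 hx
      rw [mem_frame, mem_mono, hk _ _ hxs]
      exact hs s
  refine Eq.trans (Eq.symm ?_) hF.cardU
  have hmem : ∀ m, H ≤ h.frame (g * r m) := by
    intro m
    rw [hle]
    intro s
    refine ⟨s, ?_⟩
    have h1 : (φ (r m))ᴴ * pm F s * φ (r m) = pm F s := by
      have h2 : pm F s * φ (r m) = φ (r m) * pm F s := by
        rw [hr', Matrix.mul_smul, Matrix.smul_mul, cent_comm]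
      rw [Matrix.mul_assoc, h2, ← Matrix.mul_assoc, h.unit', Matrix.one_mul]
    rw [h1]
    exact isMono_pm s
  refine Nat.card_congr (Equiv.ofBijective (fun m => ⟨h.frame (g * r m), h.isCoatom_frame hF _,
    h.card_frame hF _, hmem m⟩) ⟨?_, ?_⟩)
  · intro m k hmk
    have h1 := h.frame_inj hF hq _ _ (congrArg Subtype.val hmk)
    rw [show (g * r m)⁻¹ * (g * r k) = (r m)⁻¹ * r k by group] at h1
    obtain ⟨s, hs⟩ := h1
    have h2 : cent (star m.1 * k.1) = (star (z m) * z k) • φ ((r m)⁻¹ * r k) := by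
      rw [← cent_mul hF, ← cent_adj, hr, hr, conjTranspose_smul, smul_mul_smul_comm, map_mul, h.inv]
    have h3 : star m.1 * k.1 = 1 := by
      apply cent_mono hF (s := s)
      rw [h2]
      exact hs.smul _
    apply Subtype.ext
    linear_combination (-m.1) * h3 + k.1 * m.2
  · rintro ⟨M, hM, hMc, hHM⟩
    obtain ⟨k, hk⟩ := (h.torusData hF hq).conj M hMc
    have hMk : M = h.frame k := by
      ext x
      rw [hk, mem_frame]
    obtain ⟨y, rfl⟩ : ∃ y, k = g * y := ⟨g⁻¹ * k, by group⟩
    rw [hMk, hle] at hHM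
    obtain ⟨m, hm, s, hs⟩ := exists_cent hF (φ y) (h.unit y) hHM
    refine ⟨⟨m, hm⟩, Subtype.ext ?_⟩
    show h.frame (g * r ⟨m, hm⟩) = M
    rw [hMk]
    have h1 : (r ⟨m, hm⟩)⁻¹ * y ∈ h.mono := by
      refine ⟨s, ?_⟩
      rw [map_mul, h.inv, hr', conjTranspose_smul, Matrix.smul_mul]
      exact hs.smul _
    rw [← frame_mul h (g * r ⟨m, hm⟩) _ h1]
    congr 1
    group

end IsSU

end Count

/-! ### The projective special unitary group -/

lemma isSU_SU3 (n : ℕ) :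
    IsSU ((Matrix.unitaryGroup (Fin 3) (Fq2 n)).subtype.comp (SU3 n).subtype) where
  inj := Subtype.val_injective.comp Subtype.val_injective
  unit g := Matrix.mem_unitaryGroup_iff.1 g.1.2
  det g := g.2
  surj A hA hdet := ⟨⟨⟨A, Matrix.mem_unitaryGroup_iff.2 hA⟩, hdet⟩, rfl⟩

lemma IsSU.comp {F : Type*} [Field F] [StarRing F] {G G' : Type*} [Group G] [Group G']
    {φ : G →* Matrix (Fin 3) (Fin 3) F} (h : IsSU φ) (f : G' ≃* G) :
    IsSU (φ.comp f.toMonoidHom) where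
  inj := h.inj.comp f.injective
  unit g := h.unit (f g)
  det g := h.det (f g)
  surj A hA hdet := by
    obtain ⟨g, hg⟩ := h.surj A hA hdet
    exact ⟨f.symm g, by simpa using hg⟩

theorem stmt14 (n : ℕ) (hn : 1 ≤ n) (H : Subgroup (PSU3 n))
    (hH : Nonempty (H ≃* Equiv.Perm (Fin 3))) :
    Nat.card {M : Subgroup (PSU3 n) //
      IsCoatom M ∧ Nat.card M = 6 * (qval n + 1) ^ 2 ∧ H ≤ M} = qval n + 1 := by
  obtain ⟨e⟩ := hH
  have hF := herm_Fq2 n hn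
  have h := isSU_SU3 n
  let f : PSU3 n ≃* SU3 n :=
    (QuotientGroup.quotientMulEquivOfEq (h.center_eq_bot hF)).trans QuotientGroup.quotientBot
  exact (h.comp f).count hF (qval_mod n hn) H e

end PSUPaper
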